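/- arXiv:1801.02105 — 7 statements merged into one kernel-verified Lean document; each statement's English description precedes it below -/
import Mathlib

section
/- Let Γ be a group and N a characteristic subgroup of Γ (i.e. invariant under every automorphism of Γ). If the quotient group Γ/N has the R∞-property, then Γ has the R∞-property. -/
/-- `x` and `y` are `φ`-twisted conjugate: there is `g` with `y = g * x * φ(g)⁻¹`. -/
def TwistedConj {Γ : Type*} [Group Γ] (φ : Γ ≃* Γ) (x y : Γ) : Prop :=
  ∃ g : Γ, y = g * x * (φ g)⁻¹

/-- A group has the `R∞`-property if every automorphism has infinitely many twisted
conjugacy classes. -/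
def RInfinity (Γ : Type*) [Group Γ] : Prop :=
  ∀ φ : Γ ≃* Γ, Infinite (Quot (TwistedConj φ))

section Semiconj

variable {G H : Type*} [Group G] [Group H] {φ : G ≃* G} {ψ : H ≃* H} {f : G →* H}

theorem TwistedConj.map (hf : Function.Semiconj f φ ψ) {x y : G} (hxy : TwistedConj φ x y) :
    TwistedConj ψ (f x) (f y) := by
  obtain ⟨g, rfl⟩ := hxy
  exact ⟨f g, by rw [map_mul, map_mul, map_inv, hf.eq]⟩

theorem TwistedConj.infinite_quot_of_surjective (hf : Function.Semiconj f φ ψ)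
    (hf_surj : Function.Surjective f) [Infinite (Quot (TwistedConj ψ))] :
    Infinite (Quot (TwistedConj φ)) :=
  Infinite.of_surjective (Quot.map f fun _ _ => TwistedConj.map hf)
    (Quot.map_surjective _ hf_surj)

end Semiconj

/-- If `N` is a characteristic subgroup of `Γ` and `Γ/N` has the `R∞`-property,
then so does `Γ`. -/
theorem stmt1 {Γ : Type*} [Group Γ] (N : Subgroup Γ) [N.Characteristic]
    (h : RInfinity (Γ ⧸ N)) : RInfinity Γ := by
  intro φ
  have map_eq : N.map (φ : Γ →* Γ) = N :=
    Subgroup.characteristic_iff_map_eq.mp inferInstance φ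
  let ψ : Γ ⧸ N ≃* Γ ⧸ N := QuotientGroup.congr N N φ map_eq
  have mk_semiconj : Function.Semiconj (QuotientGroup.mk' N) φ ψ :=
    fun g => (QuotientGroup.congr_mk N N φ map_eq g).symm
  have : Infinite (Quot (TwistedConj ψ)) := h ψ
  exact TwistedConj.infinite_quot_of_surjective mk_semiconj (QuotientGroup.mk'_surjective N)
end

section
/- Let Γ be a group and N a characteristic subgroup of Γ such that the quotient Γ/N is finite. If N has the R∞-property, then Γ has the R∞-property. -/
/-!
The `φ`-twisted conjugacy classes of `Γ` are the orbits of `Γ` acting on itself by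
`g • x = g * x * (φ g)⁻¹`. If there are finitely many, then the finite-index subgroup `N` also has
finitely many orbits on `Γ`. The `N`-orbits contained in `N` are exactly the twisted conjugacy
classes of the restriction of `φ` to `N`, so there are finitely many of these too.
-/

section

variable {Γ : Type*} [Group Γ] {φ : Γ ≃* Γ} {N : Subgroup Γ}

/-- The underlying type of `Γ`, carrying the action of `Γ` by `φ`-twisted conjugation
`g • x = g * x * (φ g)⁻¹`. It is a type synonym so that this action does not clash with left
multiplication. -/
def TwistedConjSpace (_φ : Γ ≃* Γ) : Type _ := Γ

namespace TwistedConjSpace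

/-- The identity map from `Γ` to the space on which it acts by `φ`-twisted conjugation. -/
def of (φ : Γ ≃* Γ) : Γ ≃ TwistedConjSpace φ := Equiv.refl Γ

instance : MulAction Γ (TwistedConjSpace φ) where
  smul g x := of φ (g * (of φ).symm x * (φ g)⁻¹)
  one_smul x := show of φ (1 * (of φ).symm x * (φ 1)⁻¹) = x by simp
  mul_smul g h x :=
    show of φ (g * h * (of φ).symm x * (φ (g * h))⁻¹) =
      of φ (g * (h * (of φ).symm x * (φ h)⁻¹) * (φ g)⁻¹) by simp [mul_assoc]

theorem smul_of (g x : Γ) : g • of φ x = of φ (g * x * (φ g)⁻¹) := rfl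

theorem orbitRel_of_iff {x y : Γ} :
    MulAction.orbitRel Γ (TwistedConjSpace φ) (of φ x) (of φ y) ↔ TwistedConj φ x y := by
  rw [Setoid.comm']
  simp only [MulAction.orbitRel_apply, MulAction.mem_orbit_iff, smul_of,
    EmbeddingLike.apply_eq_iff_eq, TwistedConj, eq_comm]

theorem orbitRel_subgroup_of_iff {ψ : N ≃* N} (hψ : ∀ n : N, (ψ n : Γ) = φ n) {x y : N} :
    MulAction.orbitRel N (TwistedConjSpace φ) (of φ x) (of φ y) ↔ TwistedConj ψ x y := by
  rw [Setoid.comm']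
  simp only [MulAction.orbitRel_apply, MulAction.mem_orbit_iff, Subgroup.smul_def, smul_of,
    EmbeddingLike.apply_eq_iff_eq, TwistedConj, Subtype.ext_iff, Subgroup.coe_mul,
    Subgroup.coe_inv, hψ, eq_comm]

/-- The `φ`-twisted conjugacy classes are the orbits of the `φ`-twisted conjugation action. -/
def classEquivOrbit (φ : Γ ≃* Γ) :
    Quot (TwistedConj φ) ≃ MulAction.orbitRel.Quotient Γ (TwistedConjSpace φ) :=
  Quot.congr (of φ) fun _ _ => orbitRel_of_iff.symm

/-- The `N`-orbit in `Γ` of a twisted conjugacy class of the restriction `ψ` of `φ` to `N`. -/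
def subgroupOrbitOfClass {ψ : N ≃* N} (hψ : ∀ n : N, (ψ n : Γ) = φ n) :
    Quot (TwistedConj ψ) → MulAction.orbitRel.Quotient N (TwistedConjSpace φ) :=
  Quot.map (fun n => of φ n) fun _ _ => (orbitRel_subgroup_of_iff hψ).2

theorem subgroupOrbitOfClass_injective {ψ : N ≃* N} (hψ : ∀ n : N, (ψ n : Γ) = φ n) :
    Function.Injective (subgroupOrbitOfClass hψ) := by
  rintro ⟨x⟩ ⟨y⟩ hxy
  exact Quot.sound ((orbitRel_subgroup_of_iff hψ).1 (Quotient.exact hxy))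

end TwistedConjSpace

open TwistedConjSpace in
theorem TwistedConj.finite_quot_restrict [Finite (Γ ⧸ N)] [Finite (Quot (TwistedConj φ))]
    {ψ : N ≃* N} (hψ : ∀ n : N, (ψ n : Γ) = φ n) : Finite (Quot (TwistedConj ψ)) := by
  have : Finite (MulAction.orbitRel.Quotient Γ (TwistedConjSpace φ)) :=
    Finite.of_equiv _ (classEquivOrbit φ)
  have : Finite (MulAction.orbitRel.Quotient N (TwistedConjSpace φ)) :=
    MulAction.finite_quotient_of_finite_quotient_of_finite_quotient
  exact Finite.of_injective _ (subgroupOrbitOfClass_injective hψ)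

end

/-- If `N` is a characteristic subgroup of `Γ` with finite quotient `Γ/N`, and `N` has
the `R∞`-property, then so does `Γ`. -/
theorem stmt2 {Γ : Type*} [Group Γ] (N : Subgroup Γ) [N.Characteristic]
    (hfin : Finite (Γ ⧸ N)) (h : RInfinity N) : RInfinity Γ := by
  intro φ
  let ψ : N ≃* N := MulAut.characteristic N φ
  by_contra hφ
  have : Finite (Quot (TwistedConj φ)) := not_infinite_iff_finite.1 hφ
  have : Finite (Quot (TwistedConj ψ)) := TwistedConj.finite_quot_restrict fun _ => rfl
  exact not_infinite_iff_finite.2 this (h ψ)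
end

section
/- Let Γ be a group, φ : Γ → Γ an automorphism, and N a normal subgroup of finite index in Γ with φ(N) = N. Let θ : N → N be the automorphism of N obtained by restricting φ. If θ has infinitely many twisted conjugacy classes in N, then φ has infinitely many twisted conjugacy classes in Γ. (Equivalently: any infinite family of elements of N lying in pairwise distinct θ-twisted conjugacy classes of N cannot all lie in a single φ-twisted conjugacy class of Γ; in fact infinitely many of them remain in pairwise distinct φ-twisted conjugacy classes.) -/
/-!
Twisted conjugacy classes are the orbits of `Γ` acting on itself by `g • x = g * x * (φ g)⁻¹`.
Restricting the action to a subgroup `N` of finite index splits each orbit into finitely many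
`N`-orbits, and the `N`-orbits contained in `N` are the `θ`-twisted conjugacy classes.
-/

section

open MulAction

variable {Γ : Type*} [Group Γ]

/-- The set `Γ` on which the group `Γ` acts by `φ`-twisted conjugation. It is a type synonym so that
this action does not clash with left multiplication. -/
def TwistedSpace (_φ : Γ ≃* Γ) : Type _ := Γ

namespace TwistedSpace

variable (φ : Γ ≃* Γ)

/-- The identity map, regarding an element of `Γ` as a point of the space `Γ` acts on by
`φ`-twisted conjugation. -/
def of : Γ ≃ TwistedSpace φ := Equiv.refl Γ

instance : MulAction Γ (TwistedSpace φ) where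
  smul g x := of φ (g * (of φ).symm x * (φ g)⁻¹)
  one_smul x := show of φ (1 * (of φ).symm x * (φ 1)⁻¹) = x by simp
  mul_smul g k x := show of φ (g * k * (of φ).symm x * (φ (g * k))⁻¹) =
      of φ (g * (k * (of φ).symm x * (φ k)⁻¹) * (φ g)⁻¹) by
    simp only [map_mul, mul_inv_rev, mul_assoc]

variable {φ}

theorem smul_of (g x : Γ) : g • of φ x = of φ (g * x * (φ g)⁻¹) := rfl

theorem of_mem_orbit_iff {x y : Γ} : of φ y ∈ orbit Γ (of φ x) ↔ TwistedConj φ x y := by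
  simp only [mem_orbit_iff, smul_of, EmbeddingLike.apply_eq_iff_eq, TwistedConj, eq_comm]

theorem of_mem_subgroup_orbit_iff {N : Subgroup Γ} {θ : N ≃* N}
    (hθ : ∀ n : N, (θ n : Γ) = φ n) {x y : N} :
    of φ y ∈ orbit N (of φ x) ↔ TwistedConj θ x y := by
  simp only [mem_orbit_iff, Subgroup.smul_def, smul_of, EmbeddingLike.apply_eq_iff_eq,
    TwistedConj, Subtype.ext_iff, Subgroup.coe_mul, Subgroup.coe_inv, hθ, eq_comm]

end TwistedSpace

open TwistedSpace

theorem finite_orbits_of_finite_twistedConj (φ : Γ ≃* Γ) [Finite (Quot (TwistedConj φ))] :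
    Finite (orbitRel.Quotient Γ (TwistedSpace φ)) := by
  let toOrbit : Quot (TwistedConj φ) → orbitRel.Quotient Γ (TwistedSpace φ) :=
    Quot.lift (fun x ↦ ⟦of φ x⟧) fun _ _ hxy ↦
      (Quotient.sound (of_mem_orbit_iff.mpr hxy)).symm
  have toOrbit_surjective : Function.Surjective toOrbit := by
    rintro ⟨x⟩
    exact ⟨Quot.mk _ ((of φ).symm x), rfl⟩
  exact Finite.of_surjective toOrbit toOrbit_surjective

theorem finite_twistedConj_of_finite_subgroup_orbits {N : Subgroup Γ} {φ : Γ ≃* Γ} {θ : N ≃* N}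
    (hθ : ∀ n : N, (θ n : Γ) = φ n) [Finite (orbitRel.Quotient N (TwistedSpace φ))] :
    Finite (Quot (TwistedConj θ)) := by
  let toOrbit : Quot (TwistedConj θ) → orbitRel.Quotient N (TwistedSpace φ) :=
    Quot.lift (fun x ↦ ⟦of φ x⟧) fun _ _ hxy ↦
      (Quotient.sound ((of_mem_subgroup_orbit_iff hθ).mpr hxy)).symm
  have toOrbit_injective : Function.Injective toOrbit := by
    rintro ⟨x⟩ ⟨y⟩ hxy
    exact Quot.sound ((of_mem_subgroup_orbit_iff hθ).mp (Quotient.exact hxy.symm))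
  exact Finite.of_injective toOrbit toOrbit_injective

theorem stmt3_general (N : Subgroup Γ) [N.FiniteIndex] (φ : Γ ≃* Γ) (θ : N ≃* N)
    (hθ : ∀ n : N, (θ n : Γ) = φ n) (h : Infinite (Quot (TwistedConj θ))) :
    Infinite (Quot (TwistedConj φ)) := by
  contrapose! h
  have finite_orbits : Finite (orbitRel.Quotient Γ (TwistedSpace φ)) :=
    finite_orbits_of_finite_twistedConj φ
  have finite_subgroup_orbits : Finite (orbitRel.Quotient N (TwistedSpace φ)) :=
    finite_quotient_of_finite_quotient_of_finite_quotient
  exact finite_twistedConj_of_finite_subgroup_orbits hθ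

end

/-- Let `N` be a normal subgroup of finite index in `Γ`, preserved by an automorphism
`φ` of `Γ`, and let `θ` be the restriction of `φ` to `N`.  If `θ` has infinitely many
twisted conjugacy classes in `N`, then `φ` has infinitely many twisted conjugacy
classes in `Γ`. -/
theorem stmt3 {Γ : Type*} [Group Γ] (N : Subgroup Γ) [N.Normal] [N.FiniteIndex]
    (φ : Γ ≃* Γ) (hφN : ∀ g : Γ, g ∈ N ↔ φ g ∈ N)
    (θ : N ≃* N) (hθ : ∀ n : N, (θ n : Γ) = φ (n : Γ))
    (h : Infinite (Quot (TwistedConj θ))) :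
    Infinite (Quot (TwistedConj φ)) :=
  stmt3_general N φ θ hθ h
end

section
/- Let r ≥ 1, let G₀, G₁, …, G_{r-1} be groups, and for each i let eᵢ : Gᵢ ≃ G_{i+1} be a group isomorphism (indices taken modulo r, so e_{r-1} : G_{r-1} ≃ G₀). Let Γ = G₀ × G₁ × ⋯ × G_{r-1} and let Φ : Γ → Γ be the automorphism Φ(x₀, x₁, …, x_{r-1}) = (e_{r-1}(x_{r-1}), e₀(x₀), …, e_{r-2}(x_{r-2})). Let ψ = e_{r-1} ∘ e_{r-2} ∘ ⋯ ∘ e₀ : G₀ → G₀. If the elements (x₁, 1, …, 1) and (y₁, 1, …, 1) of Γ (supported in the first coordinate) are Φ-twisted conjugate in Γ, then x₁ and y₁ are ψ-twisted conjugate in G₀. -/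
/-!
If `y = g * x * (Φ g)⁻¹`, then the norms `N x = x * Φ x * ⋯ * Φ^[r - 1] x` satisfy
`N y = g * N x * (Φ^[r] g)⁻¹` by telescoping. The coordinate at `0` of `Φ^[r] g` is `ψ (g 0)`,
and that of `N (x₁, 1, …, 1)` is `x₁`, since for `0 < k < r` the automorphism `Φ^[k]` moves the
support of `(x₁, 1, …, 1)` away from `0`. The same argument works when the coordinates are shifted
along any self-map `σ` of the index set and `0` is replaced by a point of minimal period `r`.
-/

open Function

section TwistedNorm

variable {Γ : Type*}

/-- The norm `x * φ x * ⋯ * φ^[k - 1] x` of length `k`. It is the `Γ`-component of the `k`-th power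
of `(x, φ)` in the semidirect product of `Γ` with the powers of `φ`, and it turns `φ`-twisted
conjugacy into `φ^[k]`-twisted conjugacy. -/
def twistedNorm [Monoid Γ] (φ : Γ → Γ) (k : ℕ) (x : Γ) : Γ :=
  ((List.range k).map fun j => φ^[j] x).prod

theorem twistedNorm_succ [Monoid Γ] (φ : Γ → Γ) (k : ℕ) (x : Γ) :
    twistedNorm φ (k + 1) x = twistedNorm φ k x * φ^[k] x :=
  List.prod_range_succ _ k

theorem twistedNorm_mul_mul_inv [Group Γ] {F : Type*} [FunLike F Γ Γ] [MonoidHomClass F Γ Γ]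
    (φ : F) (k : ℕ) (g x : Γ) :
    twistedNorm φ k (g * x * (φ g)⁻¹) = g * twistedNorm φ k x * (φ^[k] g)⁻¹ := by
  induction k with
  | zero => simp [twistedNorm]
  | succ k ih =>
    calc twistedNorm φ (k + 1) (g * x * (φ g)⁻¹)
      _ = g * twistedNorm φ k x * (φ^[k] g)⁻¹ * (φ^[k] g * φ^[k] x * (φ^[k + 1] g)⁻¹) := by
        rw [twistedNorm_succ, ih, iterate_map_mul, iterate_map_mul, iterate_map_inv,
          iterate_succ_apply]
      _ = g * twistedNorm φ (k + 1) x * (φ^[k + 1] g)⁻¹ := by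
        rw [twistedNorm_succ]
        group

theorem TwistedConj.map_twistedNorm [Group Γ] {Δ : Type*} [Group Δ] {φ : Γ ≃* Γ} {ψ : Δ ≃* Δ}
    {k : ℕ} (f : Γ →* Δ) (hf : ∀ g, f (φ^[k] g) = ψ (f g)) {x y : Γ} (h : TwistedConj φ x y) :
    TwistedConj ψ (f (twistedNorm φ k x)) (f (twistedNorm φ k y)) := by
  obtain ⟨g, rfl⟩ := h
  exact ⟨f g, by rw [twistedNorm_mul_mul_inv, map_mul, map_mul, map_inv, hf]⟩

end TwistedNorm

section Shift

variable {ι : Type*} {G : ι → Type*} {σ : ι → ι} {Φ : (∀ i, G i) → (∀ i, G i)}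

theorem iterate_shift_apply_eq_one [∀ i, One (G i)] (hΦ : ∀ x i, x i = 1 → Φ x (σ i) = 1)
    {x : ∀ i, G i} {i j : ι} {k : ℕ} (hij : σ^[k] i = j) (hx : x i = 1) : Φ^[k] x j = 1 := by
  subst hij
  induction k with
  | zero => exact hx
  | succ k ih =>
    rw [iterate_succ_apply', iterate_succ_apply']
    exact hΦ _ _ ih

variable [DecidableEq ι]

theorem iterate_shift_mulSingle_apply_self [∀ i, One (G i)]
    (hΦ : ∀ x i, x i = 1 → Φ x (σ i) = 1) {i : ι} (a : G i) {k : ℕ} (hk : k ≠ 0)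
    (hki : k < minimalPeriod σ i) : Φ^[k] (Pi.mulSingle i a) i = 1 := by
  set j := σ^[minimalPeriod σ i - k] i with hj
  have hji : j ≠ i :=
    not_isPeriodicPt_of_pos_of_lt_minimalPeriod (by lia) (by lia)
  have hσj : σ^[k] j = i := by
    rw [hj, ← iterate_add_apply, Nat.add_sub_of_le hki.le, iterate_minimalPeriod]
  exact iterate_shift_apply_eq_one hΦ hσj (Pi.mulSingle_eq_of_ne hji a)

theorem twistedNorm_shift_mulSingle_apply_self [∀ i, Monoid (G i)]
    (hΦ : ∀ x i, x i = 1 → Φ x (σ i) = 1) {i : ι} (hi : i ∈ periodicPts σ) (a : G i) :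
    twistedNorm Φ (minimalPeriod σ i) (Pi.mulSingle i a) i = a := by
  obtain ⟨m, hm⟩ := Nat.exists_eq_add_one.mpr (minimalPeriod_pos_of_mem_periodicPts hi)
  have htail : ((List.range m).map fun k => Φ^[k + 1] (Pi.mulSingle i a) i).prod = 1 := by
    refine List.prod_eq_one fun b hb => ?_
    obtain ⟨k, hk, rfl⟩ := List.mem_map.mp hb
    have hkm : k < m := List.mem_range.mp hk
    exact iterate_shift_mulSingle_apply_self hΦ a k.succ_ne_zero (by lia)
  calc twistedNorm Φ (minimalPeriod σ i) (Pi.mulSingle i a) i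
    _ = ((List.range (m + 1)).map fun k => Φ^[k] (Pi.mulSingle i a) i).prod := by
      rw [hm, twistedNorm, Pi.list_prod_apply, List.map_map]
      rfl
    _ = a := by
      rw [List.prod_range_succ', htail, mul_one, iterate_zero_apply, Pi.mulSingle_eq_same]

theorem stmt5_general [∀ i, Group (G i)] (e : ∀ i, G i →* G (σ i))
    (Φ : (∀ i, G i) ≃* (∀ i, G i)) (hΦ : ∀ x i, Φ x (σ i) = e i (x i))
    {i : ι} (hi : i ∈ periodicPts σ) (ψ : G i ≃* G i)
    (hψ : ∀ x, Φ^[minimalPeriod σ i] x i = ψ (x i)) {a b : G i}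
    (h : TwistedConj Φ (Pi.mulSingle i a) (Pi.mulSingle i b)) : TwistedConj ψ a b := by
  have hΦ_one : ∀ x i, x i = 1 → Φ x (σ i) = 1 := fun x i hx => by rw [hΦ, hx, map_one]
  simpa only [Pi.evalMonoidHom_apply, twistedNorm_shift_mulSingle_apply_self hΦ_one hi]
    using h.map_twistedNorm (Pi.evalMonoidHom G i) hψ

end Shift

theorem minimalPeriod_fin_add_one (n : ℕ) :
    minimalPeriod (fun i : Fin (n + 1) => i + 1) 0 = n + 1 := by
  have horder : addOrderOf (1 : Fin (n + 1)) = n + 1 := ZMod.addOrderOf_one (n + 1)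
  simpa only [addOrderOf, add_comm] using horder

/-- Let `r = n+1 ≥ 1`, let `G₀, …, G_{r-1}` be groups with isomorphisms
`eᵢ : Gᵢ ≃* G_{i+1}` (indices mod `r`), let `Γ = G₀ × ⋯ × G_{r-1}` and let `Φ` be the
automorphism with `Φ(x)_{i+1} = eᵢ(xᵢ)` (indices mod `r`), i.e.
`Φ(x₀, …, x_{r-1}) = (e_{r-1}(x_{r-1}), e₀(x₀), …, e_{r-2}(x_{r-2}))`.  Let
`ψ = e_{r-1} ∘ ⋯ ∘ e₀ : G₀ ≃* G₀` (characterized by `(Φ^[r] x) 0 = ψ (x 0)`).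
If `(x₁, 1, …, 1)` and `(y₁, 1, …, 1)` are `Φ`-twisted conjugate in `Γ`, then `x₁`
and `y₁` are `ψ`-twisted conjugate in `G₀`. -/
theorem stmt5 {n : ℕ} (G : Fin (n + 1) → Type*) [∀ i, Group (G i)]
    (e : ∀ i : Fin (n + 1), G i ≃* G (i + 1))
    (Φ : (∀ i, G i) ≃* (∀ i, G i))
    (hΦ : ∀ (x : ∀ i, G i) (i : Fin (n + 1)), Φ x (i + 1) = e i (x i))
    (ψ : G 0 ≃* G 0)
    (hψ : ∀ x : ∀ i, G i, (⇑Φ)^[n + 1] x 0 = ψ (x 0))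
    (x₁ y₁ : G 0)
    (h : TwistedConj Φ (Pi.mulSingle 0 x₁) (Pi.mulSingle 0 y₁)) :
    TwistedConj ψ x₁ y₁ := by
  have hperiod := minimalPeriod_fin_add_one n
  exact stmt5_general (fun i => (e i).toMonoidHom) Φ hΦ
    (minimalPeriod_pos_iff_mem_periodicPts.mp (by lia)) ψ (by rwa [hperiod]) h
end

section
/- Every non-abelian free group of finite rank (i.e. the free group on n generators for any natural number n ≥ 2) has the R∞-property: for every automorphism φ of the free group F_n with n ≥ 2, there are infinitely many φ-twisted conjugacy classes. -/
/-!
Let `I` be the augmentation ideal of the group algebra `K[G]` of a finitely generated group over a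
field of characteristic zero, and let `Φ` be the endomorphism of `K[G]` induced by `φ`. Suppose
that there are finitely many `φ`-twisted conjugacy classes. If `g ↦ g * (φ g)⁻¹` reflects membership
in the dimension subgroup `D k = {g | g - 1 ∈ I ^ k}`, then for `z ∈ D k` two twisted conjugate
powers `z ^ m` and `z ^ n` are conjugate by an element of `D k`. Dividing by `n - m`, we see that
`1 - Φ` is surjective, hence injective, on the finite-dimensional span of the classes `g - 1`,
`g ∈ D k`, in `I ^ k / I ^ (k + 1)`, and this gives the reflection property for `D (k + 1)`. So `Φ`
never has the eigenvalue `1` on these spans, which form a Lie algebra.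

For a free group of rank `n ≥ 2` it does have this eigenvalue, for `k = 2 * n`. The eigenvalues
`μ i` of `φ` on the abelianization have product `det φ = ±1`, and an iterated bracket in which each
eigenvector occurs exactly twice has eigenvalue `(∏ i, μ i) ^ 2 = 1`. Starting with the bracket of
two distinct eigenvectors makes it nonzero, as a representation by affine transformations shows.
Generalized eigenvectors take the place of eigenvectors when `φ` is not diagonalizable.
-/

section LinearAlgebra

universe u

variable {K : Type u} {V : Type*} [Field K] [AddCommGroup V] [Module K V]

theorem roots_charpoly_eq_map_fst [FiniteDimensional K V] (f : Module.End K V)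
    [Fintype (Σ μ, Fin (Module.finrank K (f.maxGenEigenspace μ)))] :
    f.charpoly.roots = (Finset.univ : Finset (Σ μ, Fin (Module.finrank K
      (f.maxGenEigenspace μ)))).val.map Sigma.fst := by
  classical
  ext μ
  have card_fiber := Fintype.card_congr
    (Equiv.sigmaSubtype (β := fun μ => Fin (Module.finrank K (f.maxGenEigenspace μ))) μ)
  rw [Fintype.card_fin, Fintype.card_subtype] at card_fiber
  rw [Polynomial.count_roots, ← LinearMap.finrank_maxGenEigenspace_eq, Multiset.count_map,
    ← Finset.filter_val, Finset.card_val, ← card_fiber]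
  simp only [eq_comm]

theorem exists_basis_mem_maxGenEigenspace [IsAlgClosed K] [FiniteDimensional K V]
    (f : Module.End K V) :
    ∃ (ι : Type u) (_ : Fintype ι) (b : Module.Basis ι K V) (μ : ι → K),
      (∀ i, b i ∈ f.maxGenEigenspace (μ i)) ∧ ∏ i, μ i = LinearMap.det f := by
  classical
  have isInternal := DirectSum.isInternal_submodule_of_iSupIndep_of_iSup_eq_top
    f.independent_maxGenEigenspace f.iSup_maxGenEigenspace_eq_top
  let b := isInternal.collectedBasis fun μ => Module.finBasis K (f.maxGenEigenspace μ)
  have fintype : Fintype (Σ μ, Fin (Module.finrank K (f.maxGenEigenspace μ))) :=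
    FiniteDimensional.fintypeBasisIndex b
  refine ⟨_, fintype, b, Sigma.fst, isInternal.collectedBasis_mem _, ?_⟩
  rw [Module.End.det_eq_prod_roots_charpoly_of_splits (IsAlgClosed.splits _),
    roots_charpoly_eq_map_fst]
  rfl

theorem mem_of_map_mem_of_le_map_sup {f : Module.End K V} {L N F : Submodule K V}
    (hF : F.FG) (hLF : L ≤ F ⊔ N) (hfL : L ≤ L.comap f) (hfN : N ≤ N.comap f)
    (hsurj : L ≤ L.map f ⊔ N) {x : V} (hx : x ∈ L) (hfx : f x ∈ N) : x ∈ N := by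
  let L' : Submodule K (V ⧸ N) := L.map N.mkQ
  have : FiniteDimensional K L' := by
    have : FiniteDimensional K (F.map N.mkQ) := Module.Finite.iff_fg.mpr (hF.map _)
    refine Submodule.finiteDimensional_of_le (S₂ := F.map N.mkQ) ?_
    simpa [L', Submodule.map_sup] using Submodule.map_mono (f := N.mkQ) hLF
  have mapsTo : ∀ y ∈ L', N.mapQ N f hfN y ∈ L' := by
    rintro _ ⟨y, hy, rfl⟩
    exact ⟨f y, hfL hy, rfl⟩
  have surjective : Function.Surjective ((N.mapQ N f hfN).restrict mapsTo) := by
    rintro ⟨_, y, hy, rfl⟩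
    obtain ⟨_, ⟨z, hz, rfl⟩, n, hn, rfl⟩ := Submodule.mem_sup.mp (hsurj hy)
    refine ⟨⟨N.mkQ z, z, hz, rfl⟩, Subtype.ext ?_⟩
    simpa using hn
  have injective := LinearMap.injective_iff_surjective.mpr surjective
  have : (⟨N.mkQ x, x, hx, rfl⟩ : L') = 0 := by
    refine injective (Subtype.ext ?_)
    simpa using hfx
  simpa using congrArg Subtype.val this

end LinearAlgebra

section IdealPowers

variable {R S : Type*} [Ring R] [Ring S] {I : Ideal R} {J : Ideal S}

theorem map_mem_ideal_pow (f : R →+* S) (hf : ∀ a ∈ I, f a ∈ J) {k : ℕ} {a : R}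
    (ha : a ∈ I ^ k) : f a ∈ J ^ k := by
  induction k generalizing a with
  | zero => simp [Submodule.pow_zero]
  | succ k ih =>
    rw [Submodule.pow_succ] at ha ⊢
    induction ha using Submodule.mul_induction_on' with
    | mem_mul_mem b hb c hc => rw [map_mul]; exact Ideal.mul_mem_mul (ih hb) (hf c hc)
    | add b _ c _ hb hc => rw [map_add]; exact add_mem hb hc

variable [I.IsTwoSided]

theorem mul_mem_ideal_pow_add {j k : ℕ} {a b : R} (ha : a ∈ I ^ j) (hb : b ∈ I ^ k) :
    a * b ∈ I ^ (j + k) :=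
  Ideal.IsTwoSided.pow_add (I := I) j k ▸ Ideal.mul_mem_mul ha hb

theorem lie_mem_ideal_pow_add {j k : ℕ} {a b : R} (ha : a ∈ I ^ j) (hb : b ∈ I ^ k) :
    ⁅a, b⁆ ∈ I ^ (j + k) :=
  sub_mem (mul_mem_ideal_pow_add ha hb) (add_comm k j ▸ mul_mem_ideal_pow_add hb ha)

end IdealPowers

section GradedGenEigenvector

variable {K R : Type*} [CommRing K] [Ring R] [Algebra K R] {I : Ideal R} {Φ : R →ₐ[K] R}
  {j k : ℕ} {μ ν : K} {a b : R}

/-- `a` represents a generalized eigenvector (or zero), for the eigenvalue `μ`, of the endomorphism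
that `Φ` induces on the graded piece `I ^ k / I ^ (k + 1)`. The condition that some power of
`Φ - μ` maps `a` into `I ^ (k + 1)` is encoded recursively. -/
inductive IsGradedGenEigenvector (I : Ideal R) (Φ : R →ₐ[K] R) (k : ℕ) (μ : K) : R → Prop
  | of_mem {a : R} : a ∈ I ^ (k + 1) → IsGradedGenEigenvector I Φ k μ a
  | of_map_sub_smul {a : R} : a ∈ I ^ k → IsGradedGenEigenvector I Φ k μ (Φ a - μ • a) →
      IsGradedGenEigenvector I Φ k μ a

namespace IsGradedGenEigenvector

theorem mem (ha : IsGradedGenEigenvector I Φ k μ a) : a ∈ I ^ k := by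
  rcases ha with ha | ⟨ha, _⟩
  exacts [Ideal.pow_le_pow_right k.le_succ ha, ha]

theorem smul (c : K) (ha : IsGradedGenEigenvector I Φ k μ a) :
    IsGradedGenEigenvector I Φ k μ (c • a) := by
  induction ha with
  | of_mem ha => exact .of_mem (Submodule.smul_of_tower_mem _ c ha)
  | of_map_sub_smul ha _ ih =>
    refine .of_map_sub_smul (Submodule.smul_of_tower_mem _ c ha) ?_
    rwa [map_smul, smul_comm μ c, ← smul_sub]

theorem map (hΦ : ∀ a ∈ I, Φ a ∈ I) (ha : IsGradedGenEigenvector I Φ k μ a) :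
    IsGradedGenEigenvector I Φ k μ (Φ a) := by
  induction ha with
  | of_mem ha => exact .of_mem (map_mem_ideal_pow (Φ : R →+* R) hΦ ha)
  | of_map_sub_smul ha _ ih =>
    refine .of_map_sub_smul (map_mem_ideal_pow (Φ : R →+* R) hΦ ha) ?_
    rwa [map_sub, map_smul] at ih

theorem map_sub_smul (hΦ : ∀ a ∈ I, Φ a ∈ I) (ha : IsGradedGenEigenvector I Φ k μ a) :
    IsGradedGenEigenvector I Φ k μ (Φ a - μ • a) := by
  rcases ha with ha | ⟨_, ha⟩
  · exact .of_mem (sub_mem (map_mem_ideal_pow (Φ : R →+* R) hΦ ha)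
      (Submodule.smul_of_tower_mem _ μ ha))
  · exact ha

theorem add (hΦ : ∀ a ∈ I, Φ a ∈ I) (ha : IsGradedGenEigenvector I Φ k μ a)
    (hb : IsGradedGenEigenvector I Φ k μ b) : IsGradedGenEigenvector I Φ k μ (a + b) := by
  have map_add_sub_smul (a b : R) :
      Φ (a + b) - μ • (a + b) = (Φ a - μ • a) + (Φ b - μ • b) := by
    rw [map_add, smul_add, add_sub_add_comm]
  induction ha generalizing b with
  | of_map_sub_smul ha _ ih =>
    refine .of_map_sub_smul (add_mem ha hb.mem) ?_
    rw [map_add_sub_smul]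
    exact ih (hb.map_sub_smul hΦ)
  | @of_mem a ha =>
    induction hb generalizing a with
    | of_mem hb => exact .of_mem (add_mem ha hb)
    | of_map_sub_smul hb _ ih =>
      refine .of_map_sub_smul (add_mem (Ideal.pow_le_pow_right k.le_succ ha) hb) ?_
      rw [map_add_sub_smul]
      exact ih (sub_mem (map_mem_ideal_pow (Φ : R →+* R) hΦ ha)
        (Submodule.smul_of_tower_mem _ μ ha))

variable [I.IsTwoSided]

theorem mul (hΦ : ∀ a ∈ I, Φ a ∈ I) (ha : IsGradedGenEigenvector I Φ j μ a)
    (hb : IsGradedGenEigenvector I Φ k ν b) :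
    IsGradedGenEigenvector I Φ (j + k) (μ * ν) (a * b) := by
  induction ha generalizing b with
  | of_mem ha =>
    exact .of_mem (Ideal.pow_le_pow_right (by lia) (mul_mem_ideal_pow_add ha hb.mem))
  | @of_map_sub_smul a ha _ iha =>
    induction hb with
    | of_mem hb =>
      exact .of_mem (Ideal.pow_le_pow_right (by lia) (mul_mem_ideal_pow_add ha hb))
    | @of_map_sub_smul b hb hb' ihb =>
      refine .of_map_sub_smul (mul_mem_ideal_pow_add ha hb) ?_
      have leibniz : Φ (a * b) - (μ * ν) • (a * b) =
          (Φ a - μ • a) * Φ b + μ • (a * (Φ b - ν • b)) := by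
        simp [sub_mul, mul_sub, smul_sub, mul_smul]
      rw [leibniz]
      exact (iha ((of_map_sub_smul hb hb').map hΦ)).add hΦ (ihb.smul μ)

theorem lie (hΦ : ∀ a ∈ I, Φ a ∈ I) (ha : IsGradedGenEigenvector I Φ j μ a)
    (hb : IsGradedGenEigenvector I Φ k ν b) :
    IsGradedGenEigenvector I Φ (j + k) (μ * ν) ⁅a, b⁆ := by
  have hba := (hb.mul hΦ ha).smul (-1)
  rw [add_comm, mul_comm, neg_one_smul] at hba
  rw [Ring.lie_def, sub_eq_add_neg]
  exact (ha.mul hΦ hb).add hΦ hba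

end IsGradedGenEigenvector

end GradedGenEigenvector

section AugmentationIdeal

open MonoidAlgebra

variable (K G : Type*) [CommRing K] [Group G]

/-- The augmentation ideal of the group algebra `K[G]`: the kernel of the augmentation map, which
sends every group element to `1`. -/
noncomputable def augmentationIdeal : Ideal K[G] :=
  RingHom.ker (lift K K G 1)

instance : (augmentationIdeal K G).IsTwoSided :=
  inferInstanceAs (RingHom.ker (lift K K G 1)).IsTwoSided

variable {K G}

theorem mem_augmentationIdeal {a : K[G]} : a ∈ augmentationIdeal K G ↔ lift K K G 1 a = 0 :=
  RingHom.mem_ker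

theorem of_sub_one_mem_augmentationIdeal (g : G) : of K G g - 1 ∈ augmentationIdeal K G := by
  rw [mem_augmentationIdeal, map_sub, lift_of, map_one, MonoidHom.one_apply, sub_self]

theorem sub_algebraMap_lift_one_mem_span (a : K[G]) :
    a - algebraMap K K[G] (lift K K G 1 a) ∈
      Submodule.span K (Set.range fun g => of K G g - 1) := by
  induction a using MonoidAlgebra.induction_on with
  | of g =>
    rw [lift_of, MonoidHom.one_apply, map_one]
    exact Submodule.subset_span (Set.mem_range_self g)
  | add a b ha hb => simpa [add_sub_add_comm] using add_mem ha hb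
  | smul c a ha =>
    rw [map_smul, smul_eq_mul, map_mul, ← Algebra.smul_def, ← smul_sub]
    exact Submodule.smul_mem _ c ha

theorem mem_span_of_mem_augmentationIdeal {a : K[G]} (ha : a ∈ augmentationIdeal K G) :
    a ∈ Submodule.span K (Set.range fun g => of K G g - 1) := by
  simpa [mem_augmentationIdeal.mp ha] using sub_algebraMap_lift_one_mem_span a

theorem mapDomainAlgHom_of_sub_one (φ : G →* G) (g : G) :
    mapDomainAlgHom K K φ (of K G g - 1) = of K G (φ g) - 1 := by
  rw [map_sub, map_one, of_apply, of_apply, mapDomainAlgHom_apply, mapDomain_single]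

theorem mapDomainAlgHom_mem_augmentationIdeal (φ : G →* G) {a : K[G]}
    (ha : a ∈ augmentationIdeal K G) : mapDomainAlgHom K K φ a ∈ augmentationIdeal K G := by
  have comp_eq : (lift K K G 1).comp (mapDomainAlgHom K K φ) = lift K K G 1 := by
    ext g
    simp
  rw [mem_augmentationIdeal] at ha ⊢
  rw [← AlgHom.comp_apply, comp_eq, ha]

theorem mapDomainAlgHom_mem_augmentationIdeal_pow (φ : G →* G) {k : ℕ} {a : K[G]}
    (ha : a ∈ augmentationIdeal K G ^ k) :
    mapDomainAlgHom K K φ a ∈ augmentationIdeal K G ^ k :=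
  map_mem_ideal_pow (mapDomainAlgHom K K φ : K[G] →+* K[G])
    (fun _ => mapDomainAlgHom_mem_augmentationIdeal φ) ha

end AugmentationIdeal

section DimensionSubgroup

open MonoidAlgebra
open scoped commutatorElement

variable (K G : Type*) [CommRing K] [Group G]

/-- The `k`-th dimension subgroup of `G` over `K`: the elements congruent to `1` modulo the `k`-th
power of the augmentation ideal. -/
noncomputable def dimensionSubgroup (k : ℕ) : Subgroup G :=
  ((Ideal.Quotient.mk (augmentationIdeal K G ^ k)).toMonoidHom.comp (of K G)).ker

instance (k : ℕ) : (dimensionSubgroup K G k).Normal :=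
  MonoidHom.normal_ker _

variable {K G} {j k : ℕ}

theorem mem_dimensionSubgroup {g : G} :
    g ∈ dimensionSubgroup K G k ↔ of K G g - 1 ∈ augmentationIdeal K G ^ k :=
  Ideal.Quotient.eq

theorem mem_dimensionSubgroup_one (g : G) : g ∈ dimensionSubgroup K G 1 := by
  rw [mem_dimensionSubgroup, Submodule.pow_one]
  exact of_sub_one_mem_augmentationIdeal g

theorem dimensionSubgroup_succ_le (k : ℕ) :
    dimensionSubgroup K G (k + 1) ≤ dimensionSubgroup K G k := fun _ hg =>
  mem_dimensionSubgroup.mpr (Ideal.pow_le_pow_right k.le_succ (mem_dimensionSubgroup.mp hg))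

theorem map_mem_dimensionSubgroup (φ : G →* G) {g : G} (hg : g ∈ dimensionSubgroup K G k) :
    φ g ∈ dimensionSubgroup K G k := by
  rw [mem_dimensionSubgroup, ← mapDomainAlgHom_of_sub_one]
  exact mapDomainAlgHom_mem_augmentationIdeal_pow φ (mem_dimensionSubgroup.mp hg)

theorem lie_of_sub_one (g h : G) :
    ⁅of K G g - 1, of K G h - 1⁆ = (of K G ⁅g, h⁆ - 1) * of K G (h * g) := by
  rw [sub_mul, ← map_mul, commutatorElement_def, one_mul]
  simp only [Ring.lie_def, sub_mul, mul_sub, ← map_mul, one_mul, mul_one]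
  group
  abel

theorem commutator_mem_dimensionSubgroup {g h : G} (hg : g ∈ dimensionSubgroup K G j)
    (hh : h ∈ dimensionSubgroup K G k) : ⁅g, h⁆ ∈ dimensionSubgroup K G (j + k) := by
  rw [mem_dimensionSubgroup] at *
  have mul_inv : of K G ⁅g, h⁆ - 1 =
      ⁅of K G g - 1, of K G h - 1⁆ * of K G (h * g)⁻¹ := by
    rw [lie_of_sub_one, mul_assoc, ← map_mul, mul_inv_cancel, map_one, mul_one]
  rw [mul_inv]
  exact Ideal.mul_mem_right _ _ (lie_mem_ideal_pow_add hg hh)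

variable (K G) in
/-- The homomorphism `g ↦ g - 1` from the `k`-th dimension subgroup to the additive group
`K[G] / I ^ (k + 1)`, where `I` is the augmentation ideal. -/
noncomputable def dimensionClass (hk : 1 ≤ k) :
    dimensionSubgroup K G k →* Multiplicative (K[G] ⧸ augmentationIdeal K G ^ (k + 1)) :=
  MonoidHom.mk' (fun g => .ofAdd (Ideal.Quotient.mk _ (of K G g - 1))) fun g h => by
    rw [← ofAdd_add, ← map_add]
    refine congrArg Multiplicative.ofAdd (Ideal.Quotient.eq.mpr ?_)
    have factor : of K G (g * h) - 1 - (of K G g - 1 + (of K G h - 1)) =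
        (of K G g - 1) * (of K G h - 1) := by
      rw [map_mul]; noncomm_ring
    rw [Subgroup.coe_mul, factor]
    exact Ideal.pow_le_pow_right (by lia) (mul_mem_ideal_pow_add
      (mem_dimensionSubgroup.mp g.2) (mem_dimensionSubgroup.mp h.2))

variable (K G) in
/-- The homomorphism `g ↦ g - 1` from `G` to the additive group `K[G] / I ^ 2`, where `I` is the
augmentation ideal. -/
noncomputable def augmentationClass : G →* Multiplicative (K[G] ⧸ augmentationIdeal K G ^ 2) :=
  (dimensionClass K G le_rfl).comp
    ((MonoidHom.id G).codRestrict (dimensionSubgroup K G 1) mem_dimensionSubgroup_one)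

theorem exists_fg_augmentationIdeal_le_sup [Group.FG G] :
    ∃ F : Submodule K K[G], F.FG ∧ (augmentationIdeal K G).restrictScalars K ≤
      F ⊔ (augmentationIdeal K G ^ 2).restrictScalars K := by
  obtain ⟨S, hS, hSfin⟩ := Group.fg_iff.mp ‹Group.FG G›
  let F := Submodule.span K ((fun g => of K G g - 1) '' S)
  refine ⟨F, Submodule.fg_span (hSfin.image _), fun a ha => ?_⟩
  let Q := (augmentationIdeal K G ^ 2).restrictScalars K
  have closure_le : Subgroup.closure S ≤
      ((F.map Q.mkQ).toAddSubgroup.toSubgroup).comap (augmentationClass K G) := by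
    rw [Subgroup.closure_le]
    intro s hs
    exact ⟨_, Submodule.subset_span (Set.mem_image_of_mem _ hs), rfl⟩
  refine Submodule.span_le.mpr ?_ (mem_span_of_mem_augmentationIdeal ha)
  rintro _ ⟨g, rfl⟩
  have mem_map : Q.mkQ (of K G g - 1) ∈ F.map Q.mkQ := closure_le (hS ▸ Subgroup.mem_top g)
  rwa [← Submodule.mem_comap, Submodule.comap_map_mkQ, sup_comm] at mem_map

theorem exists_fg_augmentationIdeal_pow_le_sup [Group.FG G] (k : ℕ) :
    ∃ F : Submodule K K[G], F.FG ∧ (augmentationIdeal K G ^ k).restrictScalars K ≤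
      F ⊔ (augmentationIdeal K G ^ (k + 1)).restrictScalars K := by
  induction k with
  | zero =>
    refine ⟨Submodule.span K {1}, Submodule.fg_span_singleton 1, fun a _ => ?_⟩
    refine Submodule.mem_sup.mpr ⟨algebraMap K K[G] (lift K K G 1 a), ?_,
      a - algebraMap K K[G] (lift K K G 1 a), ?_, add_sub_cancel _ _⟩
    · exact Submodule.mem_span_singleton.mpr ⟨_, (Algebra.algebraMap_eq_smul_one _).symm⟩
    · simp [Submodule.pow_one, mem_augmentationIdeal]
  | succ k ih =>
    obtain ⟨F, hF, hkF⟩ := ih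
    obtain ⟨E, hE, hIE⟩ := exists_fg_augmentationIdeal_le_sup (K := K) (G := G)
    refine ⟨F * E, hF.mul hE, fun a ha => ?_⟩
    replace ha : a ∈ augmentationIdeal K G ^ k * augmentationIdeal K G := by
      rwa [← Submodule.pow_succ]
    refine Submodule.mul_induction_on ha (fun b hb c hc => ?_) fun _ _ => add_mem
    obtain ⟨f, hf, b', hb', rfl⟩ := Submodule.mem_sup.mp (hkF hb)
    obtain ⟨e, he, c', hc', rfl⟩ := Submodule.mem_sup.mp (hIE hc)
    refine Submodule.mem_sup.mpr ⟨f * e, Submodule.mul_mem_mul hf he,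
      f * c' + b' * (e + c'), add_mem ?_ ?_, by noncomm_ring⟩
    · have hf' : f ∈ augmentationIdeal K G ^ k := by
        simpa using sub_mem hb (Ideal.pow_le_pow_right k.le_succ hb')
      exact mul_mem_ideal_pow_add (k := 2) hf' hc'
    · have hcpow : e + c' ∈ augmentationIdeal K G ^ 1 := by rwa [Submodule.pow_one]
      exact mul_mem_ideal_pow_add hb' hcpow

end DimensionSubgroup

section LiePiece

open MonoidAlgebra
open scoped commutatorElement

variable (K G : Type*) [CommRing K] [Group G]

/-- The subspace of the `k`-th power of the augmentation ideal that represents, modulo the next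
power, the `k`-th graded piece of the Lie algebra of `G` formed by its dimension subgroups. -/
noncomputable def liePiece (k : ℕ) : Submodule K K[G] :=
  Submodule.span K ((fun g => of K G g - 1) '' dimensionSubgroup K G k ∪
    (augmentationIdeal K G ^ (k + 1) : Ideal K[G]))

variable {K G} {j k : ℕ}

theorem of_sub_one_mem_liePiece {g : G} (hg : g ∈ dimensionSubgroup K G k) :
    of K G g - 1 ∈ liePiece K G k :=
  Submodule.subset_span (.inl ⟨g, hg, rfl⟩)

theorem mem_liePiece_of_mem_pow_succ {a : K[G]} (ha : a ∈ augmentationIdeal K G ^ (k + 1)) :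
    a ∈ liePiece K G k :=
  Submodule.subset_span (.inr ha)

theorem mem_pow_of_mem_liePiece {a : K[G]} (ha : a ∈ liePiece K G k) :
    a ∈ augmentationIdeal K G ^ k := by
  suffices liePiece K G k ≤ (augmentationIdeal K G ^ k).restrictScalars K from this ha
  refine Submodule.span_le.mpr (Set.union_subset ?_ (Ideal.pow_le_pow_right k.le_succ))
  rintro _ ⟨g, hg, rfl⟩
  exact mem_dimensionSubgroup.mp hg

theorem mem_liePiece_one_of_mem_augmentationIdeal {a : K[G]} (ha : a ∈ augmentationIdeal K G) :
    a ∈ liePiece K G 1 := by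
  refine Submodule.span_le.mpr ?_ (mem_span_of_mem_augmentationIdeal ha)
  rintro _ ⟨g, rfl⟩
  exact of_sub_one_mem_liePiece (mem_dimensionSubgroup_one g)

theorem mapDomainAlgHom_mem_liePiece (φ : G →* G) {a : K[G]} (ha : a ∈ liePiece K G k) :
    mapDomainAlgHom K K φ a ∈ liePiece K G k := by
  suffices liePiece K G k ≤ (liePiece K G k).comap (mapDomainAlgHom K K φ).toLinearMap from
    this ha
  refine Submodule.span_le.mpr (Set.union_subset ?_ fun b hb => mem_liePiece_of_mem_pow_succ
    (mapDomainAlgHom_mem_augmentationIdeal_pow φ hb))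
  rintro _ ⟨g, hg, rfl⟩
  change mapDomainAlgHom K K φ (of K G g - 1) ∈ liePiece K G k
  rw [mapDomainAlgHom_of_sub_one]
  exact of_sub_one_mem_liePiece (map_mem_dimensionSubgroup φ hg)

theorem lie_of_sub_one_mem_liePiece {g h : G} (hg : g ∈ dimensionSubgroup K G j)
    (hh : h ∈ dimensionSubgroup K G k) :
    ⁅of K G g - 1, of K G h - 1⁆ ∈ liePiece K G (j + k) := by
  have hgh := commutator_mem_dimensionSubgroup hg hh
  have split : ⁅of K G g - 1, of K G h - 1⁆ =
      (of K G ⁅g, h⁆ - 1) + (of K G ⁅g, h⁆ - 1) * (of K G (h * g) - 1) := by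
    rw [lie_of_sub_one, mul_sub, mul_one, add_sub_cancel]
  rw [split]
  exact add_mem (of_sub_one_mem_liePiece hgh) (mem_liePiece_of_mem_pow_succ
    (mul_mem_ideal_pow_add (mem_dimensionSubgroup.mp hgh)
      (mem_dimensionSubgroup.mp (mem_dimensionSubgroup_one _))))

attribute [local instance] LieRing.ofAssociativeRing in
theorem lie_mem_liePiece {a b : K[G]} (ha : a ∈ liePiece K G j) (hb : b ∈ liePiece K G k) :
    ⁅a, b⁆ ∈ liePiece K G (j + k) := by
  induction ha, hb using Submodule.span_induction₂ with
  | mem_mem a b ha hb =>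
    rcases ha with ⟨g, hg, rfl⟩ | ha
    · rcases hb with ⟨h, hh, rfl⟩ | hb
      · exact lie_of_sub_one_mem_liePiece hg hh
      · exact mem_liePiece_of_mem_pow_succ
          (Ideal.pow_le_pow_right (by lia) (lie_mem_ideal_pow_add (mem_dimensionSubgroup.mp hg) hb))
    · exact mem_liePiece_of_mem_pow_succ (Ideal.pow_le_pow_right (by lia) (lie_mem_ideal_pow_add ha
        (mem_pow_of_mem_liePiece (Submodule.subset_span hb))))
  | zero_left b _ => rw [zero_lie]; exact zero_mem _
  | zero_right a _ => rw [lie_zero]; exact zero_mem _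
  | add_left a b c _ _ _ hac hbc => rw [add_lie]; exact add_mem hac hbc
  | add_right a b c _ _ _ hab hac => rw [lie_add]; exact add_mem hab hac
  | smul_left r a b _ _ hab => rw [smul_lie]; exact Submodule.smul_mem _ r hab
  | smul_right r a b _ _ hab => rw [lie_smul]; exact Submodule.smul_mem _ r hab

end LiePiece

section TwistedConjugacy

open MonoidAlgebra

variable {G : Type*} [Group G] {φ : G ≃* G}

theorem twistedConj_equivalence (φ : G ≃* G) : Equivalence (TwistedConj φ) where
  refl x := ⟨1, by simp⟩
  symm := by
    rintro x _ ⟨g, rfl⟩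
    exact ⟨g⁻¹, by simp [mul_assoc]⟩
  trans := by
    rintro x _ _ ⟨g, rfl⟩ ⟨h, rfl⟩
    exact ⟨h * g, by simp [mul_assoc]⟩

theorem exists_lt_twistedConj_pow [Finite (Quot (TwistedConj φ))] (z : G) :
    ∃ m n : ℕ, m < n ∧ TwistedConj φ (z ^ m) (z ^ n) := by
  obtain ⟨m, n, hmn, hquot⟩ := Finite.exists_ne_map_eq_of_infinite
    fun m : ℕ => Quot.mk (TwistedConj φ) (z ^ m)
  have conj := (twistedConj_equivalence φ).quot_mk_eq_iff _ _ |>.mp hquot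
  rcases hmn.lt_or_gt with hlt | hlt
  exacts [⟨m, n, hlt, conj⟩, ⟨n, m, hlt, (twistedConj_equivalence φ).symm conj⟩]

variable {k : ℕ}

theorem exists_nsmul_sub_mem {K : Type*} [CommRing K] [Finite (Quot (TwistedConj φ))] (hk : 1 ≤ k)
    (hfix : ∀ g, g * (φ g)⁻¹ ∈ dimensionSubgroup K G k → g ∈ dimensionSubgroup K G k)
    {z : G} (hz : z ∈ dimensionSubgroup K G k) :
    ∃ m n : ℕ, m < n ∧ ∃ g ∈ dimensionSubgroup K G k,
      n • (of K G z - 1) + (of K G (φ g) - 1) - (of K G g - 1 + m • (of K G z - 1)) ∈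
        augmentationIdeal K G ^ (k + 1) := by
  obtain ⟨m, n, hmn, g, hzn⟩ := exists_lt_twistedConj_pow (φ := φ) z
  have hg : g ∈ dimensionSubgroup K G k := by
    refine hfix g ?_
    have factor : g * (φ g)⁻¹ = z ^ n * (φ g * (z ^ m)⁻¹ * (φ g)⁻¹) := by rw [hzn]; group
    rw [factor]
    exact mul_mem (pow_mem hz n)
      (Subgroup.Normal.conj_mem inferInstance _ (inv_mem (pow_mem hz m)) _)
  have hφg : φ g ∈ dimensionSubgroup K G k := map_mem_dimensionSubgroup (φ : G →* G) hg
  have mul_eq : (⟨z, hz⟩ ^ n * ⟨φ g, hφg⟩ : dimensionSubgroup K G k) = ⟨g, hg⟩ * ⟨z, hz⟩ ^ m :=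
    Subtype.ext (by simp [hzn])
  have class_eq := congrArg (fun x => (dimensionClass K G hk x).toAdd) mul_eq
  simp only [map_mul, map_pow, toAdd_mul, toAdd_pow] at class_eq
  refine ⟨m, n, hmn, g, hg, Ideal.Quotient.eq.mp ?_⟩
  rw [map_add, map_add, map_nsmul, map_nsmul]
  exact class_eq

variable {K : Type*} [Field K]

theorem exists_of_sub_one_sub_mem [CharZero K] [Finite (Quot (TwistedConj φ))] (hk : 1 ≤ k)
    (hfix : ∀ g, g * (φ g)⁻¹ ∈ dimensionSubgroup K G k → g ∈ dimensionSubgroup K G k)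
    {z : G} (hz : z ∈ dimensionSubgroup K G k) :
    ∃ b ∈ liePiece K G k, of K G z - 1 - (b - mapDomainAlgHom K K (φ : G →* G) b) ∈
      augmentationIdeal K G ^ (k + 1) := by
  obtain ⟨m, n, hmn, g, hg, hmem⟩ := exists_nsmul_sub_mem hk hfix hz
  have hnm : (n : K) - m ≠ 0 := sub_ne_zero.mpr (mod_cast hmn.ne')
  refine ⟨((n : K) - m)⁻¹ • (of K G g - 1),
    Submodule.smul_mem _ _ (of_sub_one_mem_liePiece hg), ?_⟩
  have rescale : of K G z - 1 - (((n : K) - m)⁻¹ • (of K G g - 1) -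
      mapDomainAlgHom K K (φ : G →* G) (((n : K) - m)⁻¹ • (of K G g - 1))) =
      ((n : K) - m)⁻¹ • (n • (of K G z - 1) + (of K G (φ g) - 1) -
        (of K G g - 1 + m • (of K G z - 1))) := by
    rw [eq_inv_smul_iff₀ hnm, map_smul, mapDomainAlgHom_of_sub_one, ← smul_sub, smul_sub,
      smul_inv_smul₀ hnm, sub_smul, Nat.cast_smul_eq_nsmul, Nat.cast_smul_eq_nsmul,
      MonoidHom.coe_coe]
    abel
  rw [rescale]
  exact Submodule.smul_of_tower_mem _ _ hmem

theorem liePiece_le_map_sup [CharZero K] [Finite (Quot (TwistedConj φ))] (hk : 1 ≤ k)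
    (hfix : ∀ g, g * (φ g)⁻¹ ∈ dimensionSubgroup K G k → g ∈ dimensionSubgroup K G k) :
    liePiece K G k ≤
      (liePiece K G k).map (LinearMap.id - (mapDomainAlgHom K K (φ : G →* G)).toLinearMap) ⊔
        (augmentationIdeal K G ^ (k + 1)).restrictScalars K := by
  refine Submodule.span_le.mpr (Set.union_subset ?_ fun a ha => Submodule.mem_sup_right ha)
  rintro _ ⟨z, hz, rfl⟩
  obtain ⟨b, hb, hzb⟩ := exists_of_sub_one_sub_mem hk hfix hz
  exact Submodule.mem_sup.mpr ⟨_, Submodule.mem_map_of_mem hb, _, hzb, add_sub_cancel _ _⟩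

variable [CharZero K] [Group.FG G]

theorem mem_pow_succ_of_sub_mapDomainAlgHom_mem_of_fixed [Finite (Quot (TwistedConj φ))]
    (hk : 1 ≤ k)
    (hfix : ∀ g, g * (φ g)⁻¹ ∈ dimensionSubgroup K G k → g ∈ dimensionSubgroup K G k)
    {a : K[G]} (ha : a ∈ liePiece K G k)
    (hΦa : a - mapDomainAlgHom K K (φ : G →* G) a ∈ augmentationIdeal K G ^ (k + 1)) :
    a ∈ augmentationIdeal K G ^ (k + 1) := by
  obtain ⟨F, hF, hkF⟩ := exists_fg_augmentationIdeal_pow_le_sup (K := K) (G := G) k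
  exact mem_of_map_mem_of_le_map_sup
    (f := LinearMap.id - (mapDomainAlgHom K K (φ : G →* G)).toLinearMap)
    (N := (augmentationIdeal K G ^ (k + 1)).restrictScalars K) hF
    (fun b hb => hkF (mem_pow_of_mem_liePiece hb))
    (fun b hb => Submodule.mem_comap.mpr (sub_mem hb (mapDomainAlgHom_mem_liePiece _ hb)))
    (fun b hb => Submodule.mem_comap.mpr
      (sub_mem hb (mapDomainAlgHom_mem_augmentationIdeal_pow _ hb)))
    (liePiece_le_map_sup hk hfix) ha hΦa

theorem mem_dimensionSubgroup_of_mul_inv_mem [Finite (Quot (TwistedConj φ))] (hk : 1 ≤ k) (g : G)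
    (hg : g * (φ g)⁻¹ ∈ dimensionSubgroup K G k) : g ∈ dimensionSubgroup K G k := by
  induction k, hk using Nat.le_induction generalizing g with
  | base => exact mem_dimensionSubgroup_one g
  | succ k hk ih =>
    refine mem_dimensionSubgroup.mpr (mem_pow_succ_of_sub_mapDomainAlgHom_mem_of_fixed (φ := φ) hk
      ih (of_sub_one_mem_liePiece (ih g (dimensionSubgroup_succ_le k hg))) ?_)
    have factor : of K G g - 1 - (of K G (φ g) - 1) =
        (of K G (g * (φ g)⁻¹) - 1) * of K G (φ g) := by
      rw [sub_mul, ← map_mul, inv_mul_cancel_right, one_mul, sub_sub_sub_cancel_right]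
    rw [mapDomainAlgHom_of_sub_one, MonoidHom.coe_coe, factor]
    exact Ideal.mul_mem_right _ _ (mem_dimensionSubgroup.mp hg)

theorem mem_pow_succ_of_sub_mapDomainAlgHom_mem [Finite (Quot (TwistedConj φ))] (hk : 1 ≤ k)
    {a : K[G]} (ha : a ∈ liePiece K G k)
    (hΦa : a - mapDomainAlgHom K K (φ : G →* G) a ∈ augmentationIdeal K G ^ (k + 1)) :
    a ∈ augmentationIdeal K G ^ (k + 1) :=
  mem_pow_succ_of_sub_mapDomainAlgHom_mem_of_fixed hk
    (mem_dimensionSubgroup_of_mul_inv_mem hk) ha hΦa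

theorem mem_pow_succ_of_isGradedGenEigenvector_one [Finite (Quot (TwistedConj φ))] (hk : 1 ≤ k)
    {a : K[G]} (ha : a ∈ liePiece K G k) (heigen : IsGradedGenEigenvector (augmentationIdeal K G)
      (mapDomainAlgHom K K (φ : G →* G)) k 1 a) : a ∈ augmentationIdeal K G ^ (k + 1) := by
  induction heigen with
  | of_mem hmem => exact hmem
  | of_map_sub_smul _ _ ih =>
    refine mem_pow_succ_of_sub_mapDomainAlgHom_mem (φ := φ) hk ha (neg_mem_iff.mp ?_)
    rw [one_smul] at ih
    rw [neg_sub]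
    exact ih (sub_mem (mapDomainAlgHom_mem_liePiece _ ha) ha)

end TwistedConjugacy

section AbelianizationEnd

open scoped TensorProduct

variable (K : Type*) [CommRing K] {G : Type*} [Group G]

/-- The endomorphism that an automorphism of `G` induces on the abelianization of `G`, with scalars
extended to `K`. -/
noncomputable def abelianizationEnd (φ : G ≃* G) :
    Module.End K (K ⊗[ℤ] Additive (Abelianization G)) :=
  (MulEquiv.toAdditive φ.abelianizationCongr).toIntLinearEquiv.toLinearMap.baseChange K

theorem abelianizationEnd_tmul (φ : G ≃* G) (c : K) (g : G) :
    abelianizationEnd K φ (c ⊗ₜ Additive.ofMul (Abelianization.of g)) =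
      c ⊗ₜ Additive.ofMul (Abelianization.of (φ g)) :=
  rfl

theorem det_abelianizationEnd_sq [Module.Free ℤ (Additive (Abelianization G))]
    [Module.Finite ℤ (Additive (Abelianization G))] (φ : G ≃* G) :
    LinearMap.det (abelianizationEnd K φ) ^ 2 = 1 := by
  have isUnit_det := LinearEquiv.isUnit_det'
    (MulEquiv.toAdditive φ.abelianizationCongr).toIntLinearEquiv
  rw [abelianizationEnd, LinearMap.det_baseChange, ← map_pow, Int.isUnit_sq isUnit_det, map_one]

end AbelianizationEnd

section FreeGroup

open MonoidAlgebra
open scoped TensorProduct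

variable (K α : Type*) [CommRing K]

/-- The basis of the abelianization of a free group, with scalars extended to `K`, given by the free
generators. -/
noncomputable def abelianizationBasis :
    Module.Basis α K (K ⊗[ℤ] Additive (Abelianization (FreeGroup α))) :=
  (FreeAbelianGroup.basis α).baseChange K

/-- The linear map from the abelianization of a free group to its group algebra that sends the class
of each free generator `x` to `x - 1`. -/
noncomputable def abelianizationSection :
    K ⊗[ℤ] Additive (Abelianization (FreeGroup α)) →ₗ[K] K[FreeGroup α] :=
  (abelianizationBasis K α).constr K fun i => of K _ (FreeGroup.of i) - 1

variable {K α}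

theorem abelianizationBasis_apply (i : α) :
    abelianizationBasis K α i = 1 ⊗ₜ Additive.ofMul (Abelianization.of (FreeGroup.of i)) := by
  have basis_apply : FreeAbelianGroup.basis α i = FreeAbelianGroup.of i :=
    Module.Basis.apply_eq_iff.mpr (FreeAbelianGroup.toFinsupp_of i)
  exact (Module.Basis.baseChange_apply K _ i).trans (congrArg (1 ⊗ₜ ·) basis_apply)

theorem abelianizationSection_basis (i : α) :
    abelianizationSection K α (abelianizationBasis K α i) = of K _ (FreeGroup.of i) - 1 :=
  Module.Basis.constr_basis ..

theorem abelianizationSection_mem_augmentationIdeal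
    (v : K ⊗[ℤ] Additive (Abelianization (FreeGroup α))) :
    abelianizationSection K α v ∈ augmentationIdeal K (FreeGroup α) := by
  induction (abelianizationBasis K α).mem_span v using Submodule.span_induction with
  | mem v hv =>
    obtain ⟨i, rfl⟩ := hv
    rw [abelianizationSection_basis]
    exact of_sub_one_mem_augmentationIdeal _
  | zero => rw [map_zero]; exact zero_mem _
  | add v w _ _ hv hw => rw [map_add]; exact add_mem hv hw
  | smul c v _ hv => rw [map_smul]; exact Submodule.smul_of_tower_mem _ c hv

theorem abelianizationSection_sub_of_sub_one_mem (g : FreeGroup α) :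
    abelianizationSection K α (1 ⊗ₜ Additive.ofMul (Abelianization.of g)) - (of K _ g - 1) ∈
      augmentationIdeal K (FreeGroup α) ^ 2 := by
  let sectionClass : FreeGroup α →*
      Multiplicative (K[FreeGroup α] ⧸ augmentationIdeal K (FreeGroup α) ^ 2) :=
    (AddMonoidHom.toMultiplicative
      ((Ideal.Quotient.mk (augmentationIdeal K (FreeGroup α) ^ 2)).toAddMonoidHom.comp
        ((abelianizationSection K α).toAddMonoidHom.comp
          (TensorProduct.mk ℤ K _ 1).toAddMonoidHom))).comp Abelianization.of
  have class_eq : sectionClass = augmentationClass K (FreeGroup α) := by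
    refine FreeGroup.ext_hom _ _ fun i => congrArg (fun a => Multiplicative.ofAdd
      (Ideal.Quotient.mk (augmentationIdeal K (FreeGroup α) ^ 2) a)) ?_
    exact (congrArg _ (abelianizationBasis_apply i).symm).trans (abelianizationSection_basis i)
  exact Ideal.Quotient.eq.mp (congrArg Multiplicative.toAdd (DFunLike.congr_fun class_eq g))

theorem mapDomainAlgHom_abelianizationSection_sub_mem (φ : FreeGroup α ≃* FreeGroup α)
    (v : K ⊗[ℤ] Additive (Abelianization (FreeGroup α))) :
    mapDomainAlgHom K K (φ : FreeGroup α →* FreeGroup α) (abelianizationSection K α v) -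
      abelianizationSection K α (abelianizationEnd K φ v) ∈
        augmentationIdeal K (FreeGroup α) ^ 2 := by
  induction (abelianizationBasis K α).mem_span v using Submodule.span_induction with
  | mem v hv =>
    obtain ⟨i, rfl⟩ := hv
    rw [abelianizationSection_basis, mapDomainAlgHom_of_sub_one, abelianizationBasis_apply,
      abelianizationEnd_tmul, ← neg_mem_iff, neg_sub]
    exact abelianizationSection_sub_of_sub_one_mem _
  | zero => simp
  | add v w _ _ hv hw => simpa only [map_add, add_sub_add_comm] using add_mem hv hw
  | smul c v _ hv =>
    rw [map_smul, map_smul, map_smul, map_smul, ← smul_sub]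
    exact Submodule.smul_of_tower_mem _ c hv

theorem isGradedGenEigenvector_abelianizationSection {φ : FreeGroup α ≃* FreeGroup α} {μ : K}
    {v : K ⊗[ℤ] Additive (Abelianization (FreeGroup α))}
    (hv : v ∈ (abelianizationEnd K φ).maxGenEigenspace μ) :
    IsGradedGenEigenvector (augmentationIdeal K (FreeGroup α))
      (mapDomainAlgHom K K (φ : FreeGroup α →* FreeGroup α)) 1 μ
      (abelianizationSection K α v) := by
  obtain ⟨m, hm⟩ := (Module.End.mem_maxGenEigenspace _ _ _).mp hv
  clear hv
  induction m generalizing v with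
  | zero =>
    have hv0 : v = 0 := hm
    rw [hv0, map_zero]
    exact .of_mem (zero_mem _)
  | succ m ih =>
    refine .of_map_sub_smul
      (by rw [Submodule.pow_one]; exact abelianizationSection_mem_augmentationIdeal v) ?_
    have split : mapDomainAlgHom K K (φ : FreeGroup α →* FreeGroup α)
          (abelianizationSection K α v) - μ • abelianizationSection K α v =
        abelianizationSection K α ((abelianizationEnd K φ - μ • 1) v) +
          (mapDomainAlgHom K K (φ : FreeGroup α →* FreeGroup α) (abelianizationSection K α v) -
            abelianizationSection K α (abelianizationEnd K φ v)) := by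
      simp
    rw [split]
    exact (ih hm).add (fun _ => mapDomainAlgHom_mem_augmentationIdeal _)
      (.of_mem (mapDomainAlgHom_abelianizationSection_sub_mem φ v))

end FreeGroup

section IteratedLie

variable {ι R : Type*} [Ring R]

/-- The iterated bracket `⁅s i₁, ⁅s i₂, … ⁅s iₘ, b⁆ … ⁆⁆` over a list `[i₁, …, iₘ]`. -/
def iteratedLie (s : ι → R) (l : List ι) (b : R) : R :=
  l.foldr (fun i a => ⁅s i, a⁆) b

theorem IsGradedGenEigenvector.iteratedLie {K : Type*} [CommRing K] [Algebra K R] {I : Ideal R}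
    [I.IsTwoSided] {Φ : R →ₐ[K] R} (hΦ : ∀ a ∈ I, Φ a ∈ I) {s : ι → R} {μ : ι → K}
    (hs : ∀ i, IsGradedGenEigenvector I Φ 1 (μ i) (s i)) {k : ℕ} {ν : K} {b : R}
    (hb : IsGradedGenEigenvector I Φ k ν b) (l : List ι) :
    IsGradedGenEigenvector I Φ (l.length + k) ((l.map μ).prod * ν) (iteratedLie s l b) := by
  induction l with
  | nil => rwa [List.length_nil, zero_add, List.map_nil, List.prod_nil, one_mul]
  | cons i l ih =>
    rw [List.length_cons, List.map_cons, List.prod_cons, mul_assoc, add_right_comm,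
      add_comm _ 1]
    exact (hs i).lie hΦ ih

theorem iteratedLie_mem_liePiece {K G : Type*} [CommRing K] [Group G]
    {s : ι → MonoidAlgebra K G} (hs : ∀ i, s i ∈ augmentationIdeal K G) {k : ℕ}
    {b : MonoidAlgebra K G} (hb : b ∈ liePiece K G k) (l : List ι) :
    iteratedLie s l b ∈ liePiece K G (l.length + k) := by
  induction l with
  | nil => rwa [List.length_nil, zero_add]
  | cons i l ih =>
    rw [List.length_cons, add_right_comm, add_comm _ 1]
    exact lie_mem_liePiece (mem_liePiece_one_of_mem_augmentationIdeal (hs i)) ih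

end IteratedLie

theorem lie_topRow {R : Type*} [CommRing R] (a b c d : R) :
    ⁅!![a, b; 0, 0], !![c, d; 0, 0]⁆ = !![0, a * d - c * b; 0, 0] := by
  rw [Ring.lie_def, Matrix.mul_fin_two, Matrix.mul_fin_two]
  refine Matrix.ext fun i j => ?_
  fin_cases i <;> fin_cases j <;> simp [mul_comm]

section AffineRep

open MonoidAlgebra PowerSeries
open scoped TensorProduct

variable {K α : Type*} [CommRing K]
  (f h : Module.Dual K (K ⊗[ℤ] Additive (Abelianization (FreeGroup α))))

/-- The representation of the free group by affine transformations of the line over `K⟦X⟧` in which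
the generator with class `v` in the abelianization acts by `t ↦ (1 + f v X) t + h v X`. It detects
that elements do not lie in a given power of the augmentation ideal. -/
noncomputable def affineRep : K[FreeGroup α] →ₐ[K] Matrix (Fin 2) (Fin 2) K⟦X⟧ :=
  lift K _ _ ((Units.coeHom _).comp (FreeGroup.lift fun i =>
    Matrix.GeneralLinearGroup.mk''
      !![1 + C (f (abelianizationBasis K α i)) * X, C (h (abelianizationBasis K α i)) * X; 0, 1]
      (by simp [Matrix.det_fin_two_of, isUnit_iff_constantCoeff])))

theorem affineRep_of_generator (i : α) :
    affineRep f h (of K _ (FreeGroup.of i)) =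
      !![1 + C (f (abelianizationBasis K α i)) * X, C (h (abelianizationBasis K α i)) * X;
        0, 1] := by
  rw [affineRep, lift_of, MonoidHom.comp_apply, FreeGroup.lift_apply_of]
  rfl

theorem affineRep_abelianizationSection
    (v : K ⊗[ℤ] Additive (Abelianization (FreeGroup α))) :
    affineRep f h (abelianizationSection K α v) = !![C (f v) * X, C (h v) * X; 0, 0] := by
  induction (abelianizationBasis K α).mem_span v using Submodule.span_induction with
  | mem v hv =>
    obtain ⟨i, rfl⟩ := hv
    rw [abelianizationSection_basis, map_sub, map_one, affineRep_of_generator, Matrix.one_fin_two]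
    refine Matrix.ext fun i j => ?_
    fin_cases i <;> fin_cases j <;> simp
  | zero =>
    rw [map_zero, map_zero]
    refine Matrix.ext fun i j => ?_
    fin_cases i <;> fin_cases j <;> simp
  | add v w _ _ hv hw => rw [map_add, map_add, hv, hw]; simp [add_mul]
  | smul c v _ hv => rw [map_smul, map_smul, hv]; simp [smul_eq_C_mul, mul_assoc]

theorem map_constantCoeff_affineRep_of (g : FreeGroup α) :
    constantCoeff.mapMatrix (affineRep f h (of K _ g)) = 1 := by
  have hom_eq : (constantCoeff.mapMatrix.comp (affineRep f h).toRingHom).toMonoidHom.comp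
      (of K (FreeGroup α)) = 1 := by
    refine FreeGroup.ext_hom _ _ fun i => ?_
    change constantCoeff.mapMatrix (affineRep f h (of K _ (FreeGroup.of i))) = 1
    rw [affineRep_of_generator]
    ext m n
    fin_cases m <;> fin_cases n <;> simp
  exact DFunLike.congr_fun hom_eq g

theorem X_dvd_affineRep {a : K[FreeGroup α]} (ha : a ∈ augmentationIdeal K (FreeGroup α))
    (i j : Fin 2) : X ∣ affineRep f h a i j := by
  replace ha := mem_span_of_mem_augmentationIdeal ha
  induction ha using Submodule.span_induction with
  | mem a ha =>
    obtain ⟨g, rfl⟩ := ha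
    have map_sub_one : constantCoeff.mapMatrix (affineRep f h (of K _ g - 1)) = 0 := by
      rw [map_sub, map_sub, map_one, map_one, map_constantCoeff_affineRep_of, sub_self]
    exact X_dvd_iff.mpr (congrFun₂ map_sub_one i j)
  | zero => simp
  | add a b _ _ ha hb => rw [map_add]; exact dvd_add ha hb
  | smul c a _ ha => rw [map_smul]; exact dvd_smul_of_dvd c ha

theorem X_pow_dvd_affineRep {k : ℕ} {a : K[FreeGroup α]}
    (ha : a ∈ augmentationIdeal K (FreeGroup α) ^ k) (i j : Fin 2) :
    X ^ k ∣ affineRep f h a i j := by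
  induction k generalizing a i j with
  | zero => simp
  | succ k ih =>
    rw [Submodule.pow_succ] at ha
    induction ha using Submodule.mul_induction_on' with
    | mem_mul_mem b hb c hc =>
      rw [map_mul, Matrix.mul_apply, pow_succ]
      exact Finset.dvd_sum fun m _ => mul_dvd_mul (ih hb i m) (X_dvd_affineRep f h hc m j)
    | add b _ c _ hb hc => rw [map_add]; exact dvd_add hb hc

theorem affineRep_lie_abelianizationSection
    (u v : K ⊗[ℤ] Additive (Abelianization (FreeGroup α))) :
    affineRep f h ⁅abelianizationSection K α u, abelianizationSection K α v⁆ =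
      !![0, C (f u * h v - f v * h u) * X ^ 2; 0, 0] := by
  rw [Ring.lie_def, map_sub, map_mul, map_mul, affineRep_abelianizationSection,
    affineRep_abelianizationSection, ← Ring.lie_def, lie_topRow]
  congr! 4
  rw [map_sub, map_mul, map_mul]
  ring

theorem affineRep_iteratedLie {ι : Type*} {e : ι → K ⊗[ℤ] Additive (Abelianization (FreeGroup α))}
    (hf : ∀ i, f (e i) = 1) {b : K[FreeGroup α]} {q : K⟦X⟧}
    (hb : affineRep f h b = !![0, q; 0, 0]) (l : List ι) :
    affineRep f h (iteratedLie (fun i => abelianizationSection K α (e i)) l b) =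
      !![0, X ^ l.length * q; 0, 0] := by
  induction l with
  | nil => rwa [List.length_nil, pow_zero, one_mul]
  | cons i l ih =>
    change affineRep f h ⁅abelianizationSection K α (e i), iteratedLie _ l b⁆ = _
    rw [Ring.lie_def, map_sub, map_mul, map_mul, ih, affineRep_abelianizationSection, hf,
      ← Ring.lie_def, lie_topRow, map_one, one_mul, zero_mul, sub_zero, ← mul_assoc, ← pow_succ',
      List.length_cons]

end AffineRep

section LieWord

open MonoidAlgebra PowerSeries
open scoped TensorProduct

variable {K α ι : Type*} [CommRing K]

/-- The element `⁅v m₁, ⁅v m₂, … ⁅v mᵣ, ⁅v i, v j⁆⁆ … ⁆⁆` of the group algebra of a free group,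
where `l = [m₁, …, mᵣ]` and vectors of the abelianization are lifted along
`abelianizationSection`. -/
noncomputable def lieWord (v : ι → K ⊗[ℤ] Additive (Abelianization (FreeGroup α))) (l : List ι)
    (i j : ι) : K[FreeGroup α] :=
  iteratedLie (fun m => abelianizationSection K α (v m)) l
    ⁅abelianizationSection K α (v i), abelianizationSection K α (v j)⁆

theorem lieWord_mem_liePiece (v : ι → K ⊗[ℤ] Additive (Abelianization (FreeGroup α)))
    (l : List ι) (i j : ι) : lieWord v l i j ∈ liePiece K (FreeGroup α) (l.length + 2) := by
  have hv (m : ι) := abelianizationSection_mem_augmentationIdeal (v m)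
  exact iteratedLie_mem_liePiece hv (lie_mem_liePiece
    (mem_liePiece_one_of_mem_augmentationIdeal (hv i))
    (mem_liePiece_one_of_mem_augmentationIdeal (hv j))) l

theorem isGradedGenEigenvector_lieWord {φ : FreeGroup α ≃* FreeGroup α} {μ : ι → K}
    {v : ι → K ⊗[ℤ] Additive (Abelianization (FreeGroup α))}
    (hv : ∀ m, v m ∈ (abelianizationEnd K φ).maxGenEigenspace (μ m)) (l : List ι) (i j : ι) :
    IsGradedGenEigenvector (augmentationIdeal K (FreeGroup α))
      (mapDomainAlgHom K K (φ : FreeGroup α →* FreeGroup α)) (l.length + 2)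
      ((l.map μ).prod * (μ i * μ j)) (lieWord v l i j) := by
  have eigen (m : ι) := isGradedGenEigenvector_abelianizationSection (hv m)
  have hΦ (a : K[FreeGroup α]) (ha : a ∈ augmentationIdeal K (FreeGroup α)) :=
    mapDomainAlgHom_mem_augmentationIdeal (φ : FreeGroup α →* FreeGroup α) ha
  exact ((eigen i).lie hΦ (eigen j)).iteratedLie hΦ eigen l

theorem lieWord_notMem [Nontrivial K]
    (e : Module.Basis ι K (K ⊗[ℤ] Additive (Abelianization (FreeGroup α)))) {i j : ι}
    (hij : i ≠ j) (l : List ι) :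
    lieWord e l i j ∉ augmentationIdeal K (FreeGroup α) ^ (l.length + 2 + 1) := by
  intro hmem
  let f := e.constr K fun _ => (1 : K)
  have hf (m : ι) : f (e m) = 1 := e.constr_basis ..
  have rep_lieWord := affineRep_iteratedLie f (e.coord j) hf
    (affineRep_lie_abelianizationSection f (e.coord j) (e i) (e j)) l
  have entry_dvd := X_pow_dvd_affineRep f (e.coord j) hmem 0 1
  have pow_dvd : (X : K⟦X⟧) ^ (l.length + 2 + 1) ∣ X ^ (l.length + 2) := by
    simpa [lieWord, rep_lieWord, hf, hij, ← pow_add] using entry_dvd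
  have coeff_eq_zero := X_pow_dvd_iff.mp pow_dvd (l.length + 2) (Nat.lt_succ_self _)
  rw [coeff_X_pow_self] at coeff_eq_zero
  exact one_ne_zero coeff_eq_zero

end LieWord

section FreeGroupAutomorphism

open MonoidAlgebra
open scoped TensorProduct

universe u

theorem prod_map_toList_erase_append_mul {ι M : Type*} [CommMonoid M] [Fintype ι] [DecidableEq ι]
    (μ : ι → M) (i j : ι) :
    (((Finset.univ.erase i).toList ++ (Finset.univ.erase j).toList).map μ).prod * (μ i * μ j) =
      (∏ m, μ m) ^ 2 := by
  rw [List.map_append, List.prod_append, Finset.prod_map_toList, Finset.prod_map_toList,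
    mul_mul_mul_comm, Finset.prod_erase_mul _ _ (Finset.mem_univ i),
    Finset.prod_erase_mul _ _ (Finset.mem_univ j), sq]

variable {K : Type u} {α : Type*} [Field K] [IsAlgClosed K] [Finite α]

theorem exists_basis_mem_maxGenEigenspace_abelianizationEnd (φ : FreeGroup α ≃* FreeGroup α) :
    ∃ (ι : Type u) (_ : Fintype ι)
      (e : Module.Basis ι K (K ⊗[ℤ] Additive (Abelianization (FreeGroup α)))) (μ : ι → K),
      (∀ m, e m ∈ (abelianizationEnd K φ).maxGenEigenspace (μ m)) ∧ (∏ m, μ m) ^ 2 = 1 := by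
  have : Module.Free ℤ (Additive (Abelianization (FreeGroup α))) :=
    .of_basis (FreeAbelianGroup.basis α)
  have : Module.Finite ℤ (Additive (Abelianization (FreeGroup α))) :=
    .of_basis (FreeAbelianGroup.basis α)
  obtain ⟨ι, fintype, e, μ, he, prod_eq_det⟩ :=
    exists_basis_mem_maxGenEigenspace (abelianizationEnd K φ)
  exact ⟨ι, fintype, e, μ, he, prod_eq_det ▸ det_abelianizationEnd_sq K φ⟩

theorem exists_isGradedGenEigenvector_one_notMem [Nontrivial α] (φ : FreeGroup α ≃* FreeGroup α) :
    ∃ k, 1 ≤ k ∧ ∃ a ∈ liePiece K (FreeGroup α) k,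
      IsGradedGenEigenvector (augmentationIdeal K (FreeGroup α))
        (mapDomainAlgHom K K (φ : FreeGroup α →* FreeGroup α)) k 1 a ∧
      a ∉ augmentationIdeal K (FreeGroup α) ^ (k + 1) := by
  classical
  obtain ⟨ι, _, e, μ, he, prod_sq⟩ :=
    exists_basis_mem_maxGenEigenspace_abelianizationEnd (K := K) φ
  have : Nontrivial ι := ((abelianizationBasis K α).indexEquiv e).symm.nontrivial
  obtain ⟨i, j, hij⟩ := exists_pair_ne ι
  let l := (Finset.univ.erase i).toList ++ (Finset.univ.erase j).toList
  have eigenvalue_eq_one : (l.map μ).prod * (μ i * μ j) = 1 := by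
    rw [prod_map_toList_erase_append_mul, prod_sq]
  exact ⟨l.length + 2, by lia, lieWord e l i j, lieWord_mem_liePiece e l i j,
    eigenvalue_eq_one ▸ isGradedGenEigenvector_lieWord he l i j, lieWord_notMem e hij l⟩

end FreeGroupAutomorphism

theorem stmt10_general {α : Type*} [Finite α] [Nontrivial α] (φ : FreeGroup α ≃* FreeGroup α) :
    Infinite (Quot (TwistedConj φ)) := by
  by_contra hfin
  rw [not_infinite_iff_finite] at hfin
  obtain ⟨k, hk, a, ha, heigen, ha_notMem⟩ := exists_isGradedGenEigenvector_one_notMem (K := ℂ) φ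
  exact ha_notMem (mem_pow_succ_of_isGradedGenEigenvector_one hk ha heigen)

/-- Every non-abelian free group of finite rank `n ≥ 2` has the `R∞`-property: every
automorphism of `F_n` has infinitely many twisted conjugacy classes. -/
theorem stmt10 (n : ℕ) (hn : 2 ≤ n) (φ : FreeGroup (Fin n) ≃* FreeGroup (Fin n)) :
    Infinite (Quot (TwistedConj φ)) := by
  have := Fin.nontrivial_iff_two_le.mpr hn
  exact stmt10_general φ
end

section
/- The group SL(2, ℤ) of 2 × 2 integer matrices of determinant 1 has the R∞-property: for every automorphism φ of SL(2, ℤ), there are infinitely many φ-twisted conjugacy classes. -/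
/-!
Let `s = φ S`, `t = φ T` and `τ = tr t`. Since `S ^ 2 = (S * T) ^ 3 = -1` and `φ (-1) = -1`, we have
`tr s = 0` and `tr (s * t) = 1`, whence the commutator matrix `K = s * t - t * s` has determinant
`3 - τ ^ 2`. If a prime `p` divided it, then, as `K * g * adj K` is a multiple of `det K` for every
`g` in the group generated by `s` and `t`, which is all of `SL(2, ℤ)`, the reduction of `K` would
vanish and the image of `SL(2, ℤ)` in `SL(2, ZMod p)` would be commutative, which it is not. So
`τ ^ 2 - 3` is a unit of `ℤ`, which forces `τ = ±2`.

After a change of sign `t` fixes a nonzero vector `v`, and the matrix `A` with columns `v`, `s v`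
satisfies `A * g = ± φ g * A` for all `g`. Consequently `|tr (x * A)|` depends only on the twisted
conjugacy class of `x`, and multiplying `x` by powers of `T` makes it take infinitely many values.
-/

open Matrix ModularGroup
open scoped MatrixGroups

section TwoByTwo

variable {R : Type*} [CommRing R]

theorem mul_self_eq_trace_smul_sub_det_smul_one (A : Matrix (Fin 2) (Fin 2) R) :
    A * A = A.trace • A - A.det • 1 := by
  rw [A.eta_fin_two]
  ext i j
  fin_cases i <;> fin_cases j <;> simp [trace_fin_two, det_fin_two] <;> ring

theorem mul_add_mul_swap_eq_trace_smul (A B : Matrix (Fin 2) (Fin 2) R) :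
    A * B + B * A =
      A.trace • B + B.trace • A + ((A * B).trace - A.trace * B.trace) • 1 := by
  rw [A.eta_fin_two, B.eta_fin_two]
  ext i j
  fin_cases i <;> fin_cases j <;> simp [trace_fin_two] <;> ring

theorem det_mul_sub_mul_swap (A B : Matrix (Fin 2) (Fin 2) R) :
    (A * B - B * A).det =
      4 * A.det * B.det - A.trace ^ 2 * B.det - B.trace ^ 2 * A.det - (A * B).trace ^ 2
        + A.trace * B.trace * (A * B).trace := by
  simp only [trace_fin_two, det_fin_two, Matrix.sub_apply, mul_apply, Fin.sum_univ_two]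
  ring

theorem mul_sub_mul_swap_mul_left (A B : Matrix (Fin 2) (Fin 2) R) :
    (A * B - B * A) * A = A.adjugate * (A * B - B * A) := by
  rw [A.eta_fin_two, B.eta_fin_two, adjugate_fin_two_of]
  ext i j
  fin_cases i <;> fin_cases j <;> simp <;> ring

theorem mul_sub_mul_swap_mul_right (A B : Matrix (Fin 2) (Fin 2) R) :
    (A * B - B * A) * B = B.adjugate * (A * B - B * A) := by
  rw [← neg_sub (B * A), neg_mul, mul_neg, mul_sub_mul_swap_mul_left]

theorem det_sub_one_fin_two (A : Matrix (Fin 2) (Fin 2) R) :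
    (A - 1).det = A.det - A.trace + 1 := by
  simp only [det_fin_two, trace_fin_two, Matrix.sub_apply, one_apply_eq,
    one_apply_ne zero_ne_one, one_apply_ne one_ne_zero]
  ring

end TwoByTwo

section Generators

open Matrix.SpecialLinearGroup (coe_mul)

theorem commute_map_of_closure_pair_eq_top {G H : Type*} [Group G] [Group H] {a b : G}
    (hab : Subgroup.closure {a, b} = ⊤) (f : G →* H) (h : Commute (f a) (f b)) (x y : G) :
    Commute (f x) (f y) := by
  have hmem (g : G) : f g ∈ Subgroup.closure {f a, f b} := by
    rw [← Set.image_pair, ← MonoidHom.map_closure, hab]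
    exact Subgroup.mem_map_of_mem f (Subgroup.mem_top g)
  have hcomm : IsMulCommutative (Subgroup.closure {f a, f b}) :=
    Subgroup.isMulCommutative_closure <| by
      rintro _ (rfl | rfl) _ (rfl | rfl)
      exacts [rfl, h.eq, h.eq.symm, rfl]
  exact congrArg Subtype.val (hcomm.is_comm.comm ⟨f x, hmem x⟩ ⟨f y, hmem y⟩)

theorem semiconjBy_coe_inv {n R : Type*} [Fintype n] [DecidableEq n] [CommRing R]
    {A : Matrix n n R} {x y : Matrix.SpecialLinearGroup n R}
    (h : SemiconjBy A (x : Matrix n n R) y) :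
    SemiconjBy A ((x⁻¹ : Matrix.SpecialLinearGroup n R) : Matrix n n R)
      (y⁻¹ : Matrix.SpecialLinearGroup n R) :=
  SemiconjBy.units_inv_right (x := (x : GL n R)) (y := (y : GL n R)) h

theorem exists_semiconjBy_of_closure_eq_top {n R G : Type*} [Fintype n] [DecidableEq n]
    [CommRing R] [Group G] {X : Set G} (hX : Subgroup.closure X = ⊤)
    (f f' : G →* Matrix.SpecialLinearGroup n R)
    (N : Subgroup (Matrix.SpecialLinearGroup n R)) [N.Normal] {A : Matrix n n R}
    (h : ∀ x ∈ X, ∃ z ∈ N, SemiconjBy A (f x : Matrix n n R)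
      (z * f' x : Matrix.SpecialLinearGroup n R)) (g : G) :
    ∃ z ∈ N, SemiconjBy A (f g : Matrix n n R) (z * f' g : Matrix.SpecialLinearGroup n R) := by
  have hg : g ∈ Subgroup.closure X := hX ▸ Subgroup.mem_top g
  induction hg using Subgroup.closure_induction with
  | mem x hx => exact h x hx
  | one => exact ⟨1, N.one_mem, by simp⟩
  | mul x y _ _ hx hy =>
    obtain ⟨z, hz, hx⟩ := hx
    obtain ⟨w, hw, hy⟩ := hy
    refine ⟨z * (f' x * w * (f' x)⁻¹), N.mul_mem hz (‹N.Normal›.conj_mem w hw _), ?_⟩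
    have hfactor : z * (f' x * w * (f' x)⁻¹) * f' (x * y) = (z * f' x) * (w * f' y) := by
      rw [map_mul]
      group
    rw [hfactor, map_mul, coe_mul, coe_mul (z * f' x)]
    exact hx.mul_right hy
  | inv x _ hx =>
    obtain ⟨z, hz, hx⟩ := hx
    refine ⟨(f' x)⁻¹ * z⁻¹ * f' x, ?_, ?_⟩
    · simpa using ‹N.Normal›.conj_mem z⁻¹ (N.inv_mem hz) (f' x)⁻¹
    · have hfactor : (f' x)⁻¹ * z⁻¹ * f' x * f' x⁻¹ = (z * f' x)⁻¹ := by
        rw [map_inv]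
        group
      rw [hfactor, map_inv]
      exact semiconjBy_coe_inv hx

end Generators

section Domain

open Matrix.SpecialLinearGroup (coe_neg)

theorem neg_one_mem_center {R : Type*} [CommRing R] :
    (-1 : SL(2, R)) ∈ Subgroup.center SL(2, R) :=
  Subgroup.mem_center_iff.mpr fun g => by simp

variable {R : Type*} [CommRing R] [IsDomain R]

theorem eq_one_or_eq_neg_one_of_mem_center {z : SL(2, R)} (hz : z ∈ Subgroup.center SL(2, R)) :
    z = 1 ∨ z = -1 := by
  obtain ⟨r, hr, hrz⟩ := Matrix.SpecialLinearGroup.mem_center_iff.mp hz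
  rw [Fintype.card_fin, sq_eq_one_iff] at hr
  refine hr.imp ?_ ?_ <;> rintro rfl <;> apply Subtype.ext
  · rw [← hrz, map_one, Matrix.SpecialLinearGroup.coe_one]
  · rw [← hrz, map_neg, map_one, coe_neg, Matrix.SpecialLinearGroup.coe_one]

theorem map_neg_one_eq_neg_one (φ : SL(2, R) ≃* SL(2, R)) : φ (-1) = -1 := by
  have hcenter : φ (-1) ∈ Subgroup.center SL(2, R) :=
    MulEquivClass.apply_mem_center φ neg_one_mem_center
  refine (eq_one_or_eq_neg_one_of_mem_center hcenter).elim (fun h => ?_) id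
  have hneg : (-1 : SL(2, R)) = 1 := (map_eq_one_iff φ φ.injective).mp h
  rw [hneg, map_one]

theorem trace_eq_zero_of_sq_eq_neg_one {g : SL(2, R)} (hg : g ^ 2 = -1) : g.1.trace = 0 := by
  have hsq : g.1 * g.1 = -1 := by
    simpa [sq] using congrArg Subtype.val hg
  have hsmul : g.1.trace • g.1 = 0 := by
    simpa [hsq] using (mul_self_eq_trace_smul_sub_det_smul_one g.1).symm
  simpa using congrArg det hsmul

theorem trace_eq_one_of_pow_three_eq_neg_one {g : SL(2, R)} (hg : g ^ 3 = -1) (hg' : g ≠ -1) :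
    g.1.trace = 1 := by
  by_contra htrace
  have hfactor : (g.1.trace - 1) • ((g.1.trace + 1) • g.1 - 1) = 0 := by
    have hsq : g.1 * g.1 = g.1.trace • g.1 - 1 := by
      rw [mul_self_eq_trace_smul_sub_det_smul_one, g.2, one_smul]
    have hcube : g.1 * g.1 * g.1 = -1 := by
      simpa [pow_succ] using congrArg Subtype.val hg
    rw [hsq, sub_mul, one_mul, smul_mul_assoc, hsq] at hcube
    rw [← sub_eq_zero.mpr hcube]
    module
  have hinv : (g.1.trace + 1) • g.1 = 1 :=
    sub_eq_zero.mp ((smul_eq_zero.mp hfactor).resolve_left (sub_ne_zero.mpr htrace))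
  have htrace_factor : (g.1.trace - 1) * (g.1.trace + 2) = 0 := by
    have h := congrArg trace hinv
    rw [trace_smul, smul_eq_mul, trace_one, Fintype.card_fin] at h
    linear_combination h
  have htrace_neg : g.1.trace = -2 :=
    eq_neg_of_add_eq_zero_left
      ((mul_eq_zero.mp htrace_factor).resolve_left (sub_ne_zero.mpr htrace))
  refine hg' (Subtype.ext ?_)
  rw [coe_neg, Matrix.SpecialLinearGroup.coe_one, ← hinv, htrace_neg]
  module

end Domain

section Irreducible

open Matrix.SpecialLinearGroup (coe_mul coe_inv)

variable {R : Type*} [CommRing R]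

theorem coe_map_S : (S : SL(2, R)).1 = !![0, -1; 1, 0] := by
  ext i j
  fin_cases i <;> fin_cases j <;> simp [coe_S]

theorem coe_map_T : (T : SL(2, R)).1 = !![1, 1; 0, 1] := by
  ext i j
  fin_cases i <;> fin_cases j <;> simp [coe_T]

theorem eq_zero_of_forall_mul_mul_adjugate_eq_zero [IsReduced R]
    {K : Matrix (Fin 2) (Fin 2) R}
    (h : ∀ g : SL(2, ℤ), K * (g : SL(2, R)).1 * K.adjugate = 0) : K = 0 := by
  have hsub (g : SL(2, ℤ)) : K * ((g : SL(2, R)).1 - 1) * K.adjugate = 0 := by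
    rw [mul_sub, sub_mul, h, mul_one]
    simpa using h 1
  have hT_sub_one : (T : SL(2, R)).1 - 1 = !![0, 1; 0, 0] := by
    rw [coe_map_T, one_fin_two]
    ext i j
    fin_cases i <;> fin_cases j <;> simp
  have hSTS_sub_one : ((S * T * S⁻¹ : SL(2, ℤ)) : SL(2, R)).1 - 1 = !![0, 0; -1, 0] := by
    rw [map_mul, map_mul, map_inv, coe_mul, coe_mul, coe_inv, coe_map_S, coe_map_T,
      adjugate_fin_two_of, one_fin_two]
    ext i j
    fin_cases i <;> fin_cases j <;> simp
  have hupper := hT_sub_one ▸ hsub T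
  have hlower := hSTS_sub_one ▸ hsub (S * T * S⁻¹)
  rw [K.eta_fin_two, adjugate_fin_two_of] at hupper hlower
  have h00 : K 0 0 = 0 := by simpa [← sq] using congr($hupper 0 1)
  have h10 : K 1 0 = 0 := by simpa [← sq] using congr($hupper 1 0)
  have h01 : K 0 1 = 0 := by simpa [← sq] using congr($hlower 0 1)
  have h11 : K 1 1 = 0 := by simpa [← sq] using congr($hlower 1 0)
  ext i j
  fin_cases i <;> fin_cases j <;> assumption

-- The commutator carries each of the two generators to its adjugate, that is, to its inverse.
theorem exists_semiconjBy_commutator (ρ : SL(2, ℤ) →* SL(2, R)) (g : SL(2, ℤ)) :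
    ∃ h : SL(2, R), SemiconjBy ((ρ S).1 * (ρ T).1 - (ρ T).1 * (ρ S).1) (ρ g).1 h.1 := by
  obtain ⟨h, -, hsemiconj⟩ := exists_semiconjBy_of_closure_eq_top
    (A := (ρ S).1 * (ρ T).1 - (ρ T).1 * (ρ S).1) SpecialLinearGroup.SL2Z_generators ρ 1 ⊤ (by
      rintro x (rfl | rfl)
      · exact ⟨(ρ S)⁻¹, trivial, by
          simpa [SemiconjBy] using mul_sub_mul_swap_mul_left (ρ S).1 (ρ T).1⟩
      · exact ⟨(ρ T)⁻¹, trivial, by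
          simpa [SemiconjBy] using mul_sub_mul_swap_mul_right (ρ S).1 (ρ T).1⟩) g
  exact ⟨h, by simpa using hsemiconj⟩

theorem commute_map_S_map_T_of_det_eq_zero [IsReduced R] {ρ : SL(2, ℤ) →* SL(2, R)}
    (hrange : ∀ g : SL(2, ℤ), (g : SL(2, R)) ∈ ρ.range)
    (hdet : ((ρ S).1 * (ρ T).1 - (ρ T).1 * (ρ S).1).det = 0) :
    Commute (ρ S) (ρ T) := by
  have hzero : (ρ S).1 * (ρ T).1 - (ρ T).1 * (ρ S).1 = 0 := by
    refine eq_zero_of_forall_mul_mul_adjugate_eq_zero fun g => ?_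
    obtain ⟨g', hg'⟩ := hrange g
    obtain ⟨h, hsemiconj⟩ := exists_semiconjBy_commutator ρ g'
    rw [← hg', hsemiconj.eq, mul_assoc, mul_adjugate, hdet, zero_smul, mul_zero]
  exact Subtype.ext (sub_eq_zero.mp hzero)

theorem trace_map_T_sq_ne_three [IsReduced R] [Nontrivial R] {ρ : SL(2, ℤ) →* SL(2, R)}
    (hrange : ∀ g : SL(2, ℤ), (g : SL(2, R)) ∈ ρ.range)
    (hS : (ρ S).1.trace = 0) (hST : (ρ (S * T)).1.trace = 1) :
    (ρ T).1.trace ^ 2 ≠ 3 := by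
  intro hT
  have hdet : ((ρ S).1 * (ρ T).1 - (ρ T).1 * (ρ S).1).det = 0 := by
    rw [map_mul, coe_mul] at hST
    rw [det_mul_sub_mul_swap, hS, hT, hST, (ρ S).2, (ρ T).2]
    norm_num
  obtain ⟨x, hx⟩ := hrange S
  obtain ⟨y, hy⟩ := hrange T
  have hcomm : Commute (S : SL(2, R)) (T : SL(2, R)) := by
    rw [← hx, ← hy]
    exact commute_map_of_closure_pair_eq_top SpecialLinearGroup.SL2Z_generators ρ
      (commute_map_S_map_T_of_det_eq_zero hrange hdet) x y
  have hentry : ((S : SL(2, R)) * (T : SL(2, R))).1 0 0 =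
      ((T : SL(2, R)) * (S : SL(2, R))).1 0 0 := by rw [hcomm.eq]
  rw [coe_mul, coe_mul, coe_map_S, coe_map_T] at hentry
  simp at hentry

end Irreducible

section Automorphism

variable (φ : SL(2, ℤ) ≃* SL(2, ℤ))

theorem trace_map_S : (φ S).1.trace = 0 := by
  have hsq : S ^ 2 = (-1 : SL(2, ℤ)) := by decide
  apply trace_eq_zero_of_sq_eq_neg_one
  rw [← map_pow, hsq, map_neg_one_eq_neg_one]

theorem trace_map_S_mul_T : (φ (S * T)).1.trace = 1 := by
  have hcube : (S * T) ^ 3 = (-1 : SL(2, ℤ)) := by decide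
  have hne : S * T ≠ (-1 : SL(2, ℤ)) := by decide
  apply trace_eq_one_of_pow_three_eq_neg_one
  · rw [← map_pow, hcube, map_neg_one_eq_neg_one]
  · rw [← map_neg_one_eq_neg_one φ]
    exact φ.injective.ne hne

theorem isUnit_trace_map_T_sq_sub_three : IsUnit ((φ T).1.trace ^ 2 - 3) := by
  rw [Int.isUnit_iff_natAbs_eq]
  by_contra hunit
  obtain ⟨p, hp, hdvd⟩ := Nat.exists_prime_and_dvd hunit
  have : Fact p.Prime := ⟨hp⟩
  let ρ : SL(2, ℤ) →* SL(2, ZMod p) :=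
    (Matrix.SpecialLinearGroup.map (Int.castRingHom (ZMod p))).comp φ.toMonoidHom
  have htrace (g : SL(2, ℤ)) : (ρ g).1.trace = ((φ g).1.trace : ZMod p) := by
    simp [ρ, trace_fin_two]
  refine trace_map_T_sq_ne_three (ρ := ρ) (fun g => ⟨φ.symm g, by simp [ρ]⟩) ?_ ?_ ?_
  · rw [htrace, trace_map_S, Int.cast_zero]
  · rw [htrace, trace_map_S_mul_T, Int.cast_one]
  · rw [htrace, ← sub_eq_zero]
    exact_mod_cast (ZMod.intCast_zmod_eq_zero_iff_dvd _ p).mpr (Int.natCast_dvd.mpr hdvd)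

theorem trace_map_T : (φ T).1.trace = 2 ∨ (φ T).1.trace = -2 := by
  apply sq_eq_sq_iff_eq_or_eq_neg.mp
  rcases Int.isUnit_iff.mp (isUnit_trace_map_T_sq_sub_three φ) with h | h
  · linarith
  · have hsq : IsSquare (2 : ℤ) := ⟨(φ T).1.trace, by linarith⟩
    exact absurd hsq Int.prime_two.not_isSquare

end Automorphism

section Intertwiner

theorem mul_transpose_of_vec_two {m n R : Type*} [Fintype n] [NonUnitalNonAssocSemiring R]
    (M : Matrix m n R) (v w : n → R) :
    M * (of ![v, w])ᵀ = (of ![M *ᵥ v, M *ᵥ w])ᵀ := by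
  ext i j
  fin_cases j <;> rfl

theorem exists_ne_zero_semiconjBy_of_trace_eq {R : Type*} [CommRing R] [IsDomain R]
    {s t : SL(2, R)} (hs : s.1.trace = 0) (ht : t.1.trace = 2) (hst : (s * t).1.trace = 1) :
    ∃ A : Matrix (Fin 2) (Fin 2) R, A ≠ 0 ∧
      SemiconjBy A !![0, -1; 1, 0] s.1 ∧ SemiconjBy A !![1, 1; 0, 1] t.1 := by
  obtain ⟨v, hv, htv⟩ : ∃ v ≠ 0, (t.1 - 1) *ᵥ v = 0 := by
    rw [exists_mulVec_eq_zero_iff, det_sub_one_fin_two, t.2, ht]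
    norm_num
  replace htv : t.1 *ᵥ v = v := by
    rwa [sub_mulVec, one_mulVec, sub_eq_zero] at htv
  have hssv : s.1 *ᵥ (s.1 *ᵥ v) = -v := by
    rw [mulVec_mulVec, mul_self_eq_trace_smul_sub_det_smul_one, hs, s.2,
      zero_smul, one_smul, zero_sub, neg_mulVec, one_mulVec]
  have htsv : t.1 *ᵥ (s.1 *ᵥ v) = v + s.1 *ᵥ v := by
    have hts : t.1 * s.1 = 1 + (2 : R) • s.1 - s.1 * t.1 := by
      rw [Matrix.SpecialLinearGroup.coe_mul] at hst
      rw [eq_sub_iff_add_eq', mul_add_mul_swap_eq_trace_smul, hs, ht, hst]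
      module
    rw [mulVec_mulVec, hts, sub_mulVec, add_mulVec, smul_mulVec, one_mulVec,
      ← mulVec_mulVec, htv]
    module
  generalize hsv : s.1 *ᵥ v = w at hssv htsv
  refine ⟨(of ![v, w])ᵀ, fun hA => hv ?_, ?_, ?_⟩
  · exact funext fun i => congr($hA i 0)
  · rw [SemiconjBy, mul_transpose_of_vec_two, hsv, hssv]
    ext i j
    fin_cases j <;> simp [mul_apply]
  · rw [SemiconjBy, mul_transpose_of_vec_two, htv, htsv]
    ext i j
    fin_cases j <;> simp [mul_apply]

theorem exists_ne_zero_semiconjBy_map (φ : SL(2, ℤ) ≃* SL(2, ℤ)) :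
    ∃ A : Matrix (Fin 2) (Fin 2) ℤ, A ≠ 0 ∧
      ∀ g, ∃ z ∈ Subgroup.center SL(2, ℤ), SemiconjBy A g.1 (z * φ g).1 := by
  obtain ⟨z, hz, hT⟩ : ∃ z ∈ Subgroup.center SL(2, ℤ), (z * φ T).1.trace = 2 := by
    rcases trace_map_T φ with h | h
    · exact ⟨1, one_mem _, by simpa using h⟩
    · exact ⟨-1, neg_one_mem_center, by simp [h]⟩
  have hS : (z * φ S).1.trace = 0 := by
    rcases eq_one_or_eq_neg_one_of_mem_center hz with rfl | rfl <;> simp [trace_map_S]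
  have hST : (z * φ S * (z * φ T)).1.trace = 1 := by
    have h := trace_map_S_mul_T φ
    rw [map_mul] at h
    rcases eq_one_or_eq_neg_one_of_mem_center hz with rfl | rfl <;> simpa using h
  obtain ⟨A, hA, hAS, hAT⟩ := exists_ne_zero_semiconjBy_of_trace_eq hS hT hST
  refine ⟨A, hA, exists_semiconjBy_of_closure_eq_top SpecialLinearGroup.SL2Z_generators
    (MonoidHom.id _) φ.toMonoidHom _ ?_⟩
  rintro x (rfl | rfl)
  exacts [⟨z, hz, hAS⟩, ⟨z, hz, hAT⟩]

end Intertwiner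

section TwistedTrace

open Matrix.SpecialLinearGroup (coe_mul)

theorem natAbs_trace_mul_eq_of_twistedConj {φ : SL(2, ℤ) ≃* SL(2, ℤ)}
    {A : Matrix (Fin 2) (Fin 2) ℤ}
    (hA : ∀ g, ∃ z ∈ Subgroup.center SL(2, ℤ), SemiconjBy A g.1 (z * φ g).1)
    {x y : SL(2, ℤ)} (hxy : TwistedConj φ x y) :
    (x.1 * A).trace.natAbs = (y.1 * A).trace.natAbs := by
  obtain ⟨g, rfl⟩ := hxy
  obtain ⟨z, hz, hsemiconj⟩ := hA g⁻¹
  have hconj : (x.1 * A).trace = (g.1 * x.1 * (A * g⁻¹.1)).trace := by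
    rw [mul_assoc, trace_mul_comm g.1, mul_assoc, mul_assoc, ← coe_mul, inv_mul_cancel,
      Matrix.SpecialLinearGroup.coe_one, mul_one]
  rw [hconj, hsemiconj.eq, map_inv]
  rcases eq_one_or_eq_neg_one_of_mem_center hz with rfl | rfl <;> simp [mul_assoc]

theorem exists_mul_mul_apply_one_zero_ne_zero {A : Matrix (Fin 2) (Fin 2) ℤ} (hA : A ≠ 0) :
    ∃ y z : SL(2, ℤ), (y.1 * A * z.1) 1 0 ≠ 0 := by
  contrapose! hA
  rw [A.eta_fin_two] at hA
  have h10 : A 1 0 = 0 := by simpa using hA 1 1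
  have h00 : A 0 0 = 0 := by simpa [coe_S] using hA S 1
  have h11 : A 1 1 = 0 := by simpa [coe_S] using hA 1 S
  have h01 : A 0 1 = 0 := by simpa [coe_S] using hA S S
  ext i j
  fin_cases i <;> fin_cases j <;> assumption

theorem trace_T_zpow_mul (B : Matrix (Fin 2) (Fin 2) ℤ) (n : ℤ) :
    ((T ^ n).1 * B).trace = B.trace + n * B 1 0 := by
  rw [trace_fin_two, trace_fin_two, mul_apply, mul_apply, Fin.sum_univ_two, Fin.sum_univ_two,
    coe_T_zpow]
  simp only [of_apply, cons_val', cons_val_fin_one, cons_val_zero, cons_val_one]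
  ring

theorem infinite_range_natAbs_trace_mul {A : Matrix (Fin 2) (Fin 2) ℤ} (hA : A ≠ 0) :
    (Set.range fun x : SL(2, ℤ) => (x.1 * A).trace.natAbs).Infinite := by
  obtain ⟨y, z, hyz⟩ := exists_mul_mul_apply_one_zero_ne_zero hA
  have htrace (n : ℤ) : ((z * T ^ n * y).1 * A).trace =
      (y.1 * A * z.1).trace + n * (y.1 * A * z.1) 1 0 := by
    rw [← trace_T_zpow_mul, coe_mul, coe_mul, mul_assoc, mul_assoc, trace_mul_comm, mul_assoc]
  have hinj : Function.Injective fun n : ℤ => ((z * T ^ n * y).1 * A).trace := by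
    intro m n hmn
    simpa only [htrace, add_right_inj, mul_left_inj' hyz] using hmn
  intro hfinite
  refine Set.infinite_range_of_injective hinj
    ((hfinite.preimage' (f := Int.natAbs) fun k _ => ?_).subset ?_)
  · exact (Set.toFinite {(k : ℤ), -(k : ℤ)}).subset fun m hm => Int.natAbs_eq_iff.mp hm
  · rintro _ ⟨n, rfl⟩
    exact ⟨z * T ^ n * y, rfl⟩

end TwistedTrace

/-- `SL(2, ℤ)` has the `R∞`-property: every automorphism of `SL(2, ℤ)` has infinitely
many twisted conjugacy classes. -/
theorem stmt11 (φ : Matrix.SpecialLinearGroup (Fin 2) ℤ ≃* Matrix.SpecialLinearGroup (Fin 2) ℤ) :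
    Infinite (Quot (TwistedConj φ)) := by
  obtain ⟨A, hA, hsemiconj⟩ := exists_ne_zero_semiconjBy_map φ
  let twistedTrace : Quot (TwistedConj φ) → ℕ :=
    Quot.lift (fun x => (x.1 * A).trace.natAbs) fun _ _ =>
      natAbs_trace_mul_eq_of_twistedConj hsemiconj
  by_contra hfinite
  rw [not_infinite_iff_finite] at hfinite
  refine infinite_range_natAbs_trace_mul hA ((Set.finite_range twistedTrace).subset ?_)
  rintro _ ⟨x, rfl⟩
  exact ⟨Quot.mk _ x, rfl⟩
end

section
/- The infinite dihedral group D∞ (the semidirect product of ℤ by ℤ/2 acting by negation) has the R∞-property: for every automorphism φ of D∞ there are infinitely many φ-twisted conjugacy classes. -/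
/-!
Twisted conjugacy classes are the orbits of the action `g • x = g * x * (φ g)⁻¹`. Suppose that on an
infinite commutative subgroup `H` of finite index, `φ` is conjugation by some `s`. Then `H` fixes
every point of the infinite set `H * s⁻¹`, so the classes meeting this set are finite, and hence
there are infinitely many of them. In `D∞` take `H = ⟨r 1⟩`: an automorphism sends `r 1` to an
element of infinite order that again generates the rotations, so to `r 1` or to its conjugate
`r (-1)`.
-/

namespace TwistedConj

variable {Γ : Type*} [Group Γ] {φ : Γ ≃* Γ}

theorem equivalence (φ : Γ ≃* Γ) : Equivalence (TwistedConj φ) where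
  refl x := ⟨1, by simp⟩
  symm := by
    rintro x _ ⟨g, rfl⟩
    exact ⟨g⁻¹, by simp [mul_assoc]⟩
  trans := by
    rintro x _ _ ⟨g, rfl⟩ ⟨k, rfl⟩
    exact ⟨k * g, by simp [mul_assoc]⟩

theorem finite_setOf_of_forall_mem_fixed {H : Subgroup Γ} [H.FiniteIndex] {x : Γ}
    (hx : ∀ h ∈ H, h * x * (φ h)⁻¹ = x) : {y | TwistedConj φ x y}.Finite := by
  refine (Set.finite_range fun q : Γ ⧸ H => q.out * x * (φ q.out)⁻¹).subset ?_
  rintro _ ⟨g, rfl⟩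
  obtain ⟨h, hout⟩ := QuotientGroup.mk_out_eq_mul H g
  refine ⟨(g : Γ ⧸ H), ?_⟩
  calc (g : Γ ⧸ H).out * x * (φ (g : Γ ⧸ H).out)⁻¹
      = g * (h * x * (φ h)⁻¹) * (φ g)⁻¹ := by simp only [hout, map_mul, mul_inv_rev, mul_assoc]
    _ = g * x * (φ g)⁻¹ := by rw [hx h h.2]

theorem infinite_quot_of_forall_mem_finite {S : Set Γ} (hS : S.Infinite)
    (hfin : ∀ x ∈ S, {y | TwistedConj φ x y}.Finite) : Infinite (Quot (TwistedConj φ)) := by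
  refine not_finite_iff_infinite.mp fun _ => ?_
  refine hS (Set.Finite.of_finite_fibers (Quot.mk (TwistedConj φ)) (Set.toFinite _) ?_)
  rintro _ ⟨x, hx, rfl⟩
  refine (hfin x hx).subset ?_
  rintro y ⟨-, hy⟩
  exact ((equivalence φ).quot_mk_eq_iff x y).mp hy.symm

theorem infinite_quot_of_forall_mem_map_eq_conj {H : Subgroup Γ} [IsMulCommutative H]
    [Infinite H] [H.FiniteIndex] {s : Γ} (hφ : ∀ h ∈ H, φ h = s * h * s⁻¹) :
    Infinite (Quot (TwistedConj φ)) := by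
  have hS : ((· * s⁻¹) '' (H : Set Γ)).Infinite :=
    (Set.infinite_coe_iff.mp ‹Infinite H›).image (mul_left_injective s⁻¹).injOn
  refine infinite_quot_of_forall_mem_finite hS ?_
  rintro _ ⟨x, hx, rfl⟩
  refine finite_setOf_of_forall_mem_fixed (H := H) fun h hh => ?_
  have hcomm : h * x = x * h := setLike_mul_comm hh hx
  calc h * (x * s⁻¹) * (φ h)⁻¹ = h * x * h⁻¹ * s⁻¹ := by rw [hφ h hh]; group
    _ = x * s⁻¹ := by rw [hcomm, mul_inv_cancel_right]

theorem infinite_quot_of_isConj_map {a : Γ} [(Subgroup.zpowers a).FiniteIndex]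
    (ha : ¬IsOfFinOrder a) (hφ : IsConj a (φ a)) : Infinite (Quot (TwistedConj φ)) := by
  obtain ⟨s, hs⟩ := isConj_iff.mp hφ
  have : Infinite (Subgroup.zpowers a) := (infinite_zpowers.mpr ha).to_subtype
  refine infinite_quot_of_forall_mem_map_eq_conj (H := Subgroup.zpowers a) (s := s) ?_
  rintro _ ⟨k, rfl⟩
  simp only [map_zpow, ← hs, conj_zpow]

end TwistedConj

section Dihedral

open DihedralGroup

variable {n : ℕ}

theorem exists_eq_r_of_orderOf_ne_two {x : DihedralGroup n} (hx : orderOf x ≠ 2) :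
    ∃ i, x = r i := by
  rcases x with i | i
  · exact ⟨i, rfl⟩
  · exact absurd (orderOf_sr i) hx

theorem map_r_eq_r_mul {e : ZMod n} (φ : DihedralGroup n →* DihedralGroup n)
    (he : φ (r 1) = r e) (i : ZMod n) : φ (r i) = r (e * i) := by
  obtain ⟨k, rfl⟩ := ZMod.intCast_surjective i
  rw [← r_one_zpow, map_zpow, he, r_zpow]

theorem exists_isUnit_map_r_one_eq (hn : n ≠ 2) (φ : DihedralGroup n ≃* DihedralGroup n) :
    ∃ e, IsUnit e ∧ φ (r 1) = r e := by
  have map_r_one (ψ : DihedralGroup n ≃* DihedralGroup n) : ∃ e, ψ (r 1) = r e :=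
    exists_eq_r_of_orderOf_ne_two (by rwa [ψ.orderOf_eq, orderOf_r_one])
  obtain ⟨e, he⟩ := map_r_one φ
  obtain ⟨d, hd⟩ := map_r_one φ.symm
  have hmul : r (e * d) = r 1 := by
    rw [← map_r_eq_r_mul φ.toMonoidHom he d, ← hd]
    exact φ.apply_symm_apply _
  exact ⟨e, .of_mul_eq_one d (r.inj hmul), he⟩

theorem isConj_r_neg (i : ZMod n) : IsConj (r i) (r (-i)) :=
  isConj_iff.mpr ⟨sr 0, by simp⟩

theorem r_mem_zpowers_r_one (i : ZMod n) : r i ∈ Subgroup.zpowers (r 1 : DihedralGroup n) := by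
  obtain ⟨k, rfl⟩ := ZMod.intCast_surjective i
  exact ⟨k, r_one_zpow k⟩

theorem sr_notMem_zpowers_r_one (i : ZMod n) :
    sr i ∉ Subgroup.zpowers (r 1 : DihedralGroup n) := by
  rintro ⟨k, hk⟩
  simp at hk

theorem index_zpowers_r_one : (Subgroup.zpowers (r 1 : DihedralGroup n)).index = 2 := by
  refine Subgroup.index_eq_two_iff.mpr ⟨sr 0, ?_⟩
  rintro (i | i) <;> simp [r_mem_zpowers_r_one, sr_notMem_zpowers_r_one]

instance finiteIndex_zpowers_r_one : (Subgroup.zpowers (r 1 : DihedralGroup n)).FiniteIndex :=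
  ⟨by simp [index_zpowers_r_one]⟩

theorem isConj_r_one_map_r_one (φ : DihedralGroup 0 ≃* DihedralGroup 0) :
    IsConj (r 1) (φ (r 1)) := by
  obtain ⟨e, he, hφ⟩ := exists_isUnit_map_r_one_eq (by decide) φ
  rw [hφ]
  rcases Int.isUnit_iff.mp he with rfl | rfl
  · exact IsConj.refl _
  · exact isConj_r_neg 1

end Dihedral

/-- The infinite dihedral group `D∞` (in Mathlib, `DihedralGroup 0`) has the
`R∞`-property: every automorphism of `D∞` has infinitely many twisted conjugacy
classes. -/
theorem stmt12 (φ : DihedralGroup 0 ≃* DihedralGroup 0) :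
    Infinite (Quot (TwistedConj φ)) := by
  have hr : ¬IsOfFinOrder (DihedralGroup.r 1 : DihedralGroup 0) :=
    orderOf_eq_zero_iff.mp DihedralGroup.orderOf_r_one
  exact TwistedConj.infinite_quot_of_isConj_map hr (isConj_r_one_map_r_one φ)
end
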